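/- arXiv:1605.06696 — 5 statements merged into one kernel-verified Lean document; each statement's English description precedes it below -/
import Mathlib

section
/- Let X be an n×n matrix over a commutative ring, let A, B ⊆ {1,…,n} and let C ⊆ B. Then Σ_{C ⊆ V ⊆ B} X{A|V} = Σ_{U ⊇ A, W ⊆ C} (−1)^{|W|} X{U|B∖W}, where on the left V ranges over subsets of B containing C, and on the right U ranges over subsets of {1,…,n} containing A and W over subsets of C. -/
open Finset

/-- The minor `X(A|B)`: the determinant of the submatrix of `X` with row indices in `A` and
column indices in `B`, taken in increasing order; `0` if `|A| ≠ |B|`. -/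
def minorM {m n : ℕ} {R : Type*} [CommRing R]
    (X : Matrix (Fin m) (Fin n) R) (A : Finset (Fin m)) (B : Finset (Fin n)) : R :=
  if h : A.card = B.card then
    (Matrix.of fun i j : Fin A.card =>
      X (A.orderEmbOfFin rfl i) (B.orderEmbOfFin h.symm j)).det
  else 0

/-- The Laplace product `X{A|B} = (-1)^(ΣA+ΣB) X(A|B) X(Ã|B̃)`, where elements of
`Fin n` are counted as the numbers `1,…,n` (so `i : Fin n` counts as `i+1`). -/
def lap {n : ℕ} {R : Type*} [CommRing R]
    (X : Matrix (Fin n) (Fin n) R) (A B : Finset (Fin n)) : R :=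
  (-1 : R) ^ (∑ i ∈ A, ((i : ℕ) + 1) + ∑ j ∈ B, ((j : ℕ) + 1)) *
    (minorM X A B * minorM X Aᶜ Bᶜ)

/-- The partial order `S ≤ T` on finite subsets of a linearly ordered set:
writing `S = {s₁<⋯<s_p}` and `T = {t₁<⋯<t_q}`, it means `p ≥ q` and `s_ν ≤ t_ν` for `ν ≤ q`. -/
def domLE {α : Type*} [LinearOrder α] (S T : Finset α) : Prop :=
  T.card ≤ S.card ∧ ∀ (ν : ℕ) (hT : ν < (T.sort (· ≤ ·)).length)
    (hS : ν < (S.sort (· ≤ ·)).length),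
    (S.sort (· ≤ ·))[ν] ≤ (T.sort (· ≤ ·))[ν]

/-- A subset `S ⊆ {1,…,n}` is good if `S ≤ S̃` where `S̃` is the complement of `S`. -/
def goodSet {n : ℕ} (S : Finset (Fin n)) : Prop := domLE S Sᶜ

/-- The generic `m×n` matrix, whose entries are the indeterminates `x_{ij}`. -/
noncomputable def genX (m n : ℕ) (R : Type*) [CommRing R] :
    Matrix (Fin m) (Fin n) (MvPolynomial (Fin m × Fin n) R) :=
  Matrix.of fun i j => MvPolynomial.X (i, j)

/-- The enumeration of `Fin n` listing `A` first and then its complement. -/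
def enumE {n a b : ℕ} (A : Finset (Fin n)) (h : A.card = a ∧ Aᶜ.card = b) :
    Fin a ⊕ Fin b ≃ Fin n := finSumEquivOfFinset h.1 h.2

theorem enumE_map {n a b : ℕ} (A A' : Finset (Fin n)) (h : A.card = a ∧ Aᶜ.card = b)
    (h' : A'.card = a ∧ A'ᶜ.card = b) (f : Equiv.Perm (Fin n))
    (hf : ∀ x, f x ∈ A ↔ x ∈ A')
    (h1 : ∀ x ∈ A', ∀ y ∈ A', x < y → f x < f y)
    (h2 : ∀ x ∉ A', ∀ y ∉ A', x < y → f x < f y) :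
    enumE A h = (enumE A' h').trans f := by
  have k1 : (fun i => f (A'.orderEmbOfFin h'.1 i)) = A.orderEmbOfFin h.1 := by
    apply Finset.orderEmbOfFin_unique
    · intro i
      rw [hf]; exact Finset.orderEmbOfFin_mem _ _ _
    · intro i j hij
      exact h1 _ (Finset.orderEmbOfFin_mem _ _ _) _ (Finset.orderEmbOfFin_mem _ _ _)
        ((A'.orderEmbOfFin h'.1).strictMono hij)
  have k2 : (fun i => f (A'ᶜ.orderEmbOfFin h'.2 i)) = Aᶜ.orderEmbOfFin h.2 := by
    apply Finset.orderEmbOfFin_unique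
    · intro i
      rw [Finset.mem_compl, hf, ← Finset.mem_compl]; exact Finset.orderEmbOfFin_mem _ _ _
    · intro i j hij
      exact h2 _ (Finset.mem_compl.1 (Finset.orderEmbOfFin_mem _ _ _)) _
        (Finset.mem_compl.1 (Finset.orderEmbOfFin_mem _ _ _))
        ((A'ᶜ.orderEmbOfFin h'.2).strictMono hij)
  ext x
  rcases x with i | i
  · simp [enumE, ← k1]
  · simp [enumE, ← k2]

theorem exists_lower {n a b : ℕ} (N : ℕ) : ∀ (A : Finset (Fin n)) (h : A.card = a ∧ Aᶜ.card = b),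
    ∑ i ∈ A, ((i : ℕ) + 1) = N →
    ∃ (I : Finset (Fin n)) (hI : I.card = a ∧ Iᶜ.card = b), IsLowerSet (I : Set (Fin n)) ∧
      Equiv.Perm.sign ((enumE I hI).symm.trans (enumE A h)) =
        (-1) ^ (∑ i ∈ A, ((i : ℕ) + 1) + ∑ i ∈ I, ((i : ℕ) + 1)) := by
  induction N with
  | zero =>
    intro A h hN
    have : A = ∅ := by
      by_contra hA
      obtain ⟨x, hx⟩ := Finset.nonempty_iff_ne_empty.2 hA
      have := (Finset.sum_eq_zero_iff.1 hN) x hx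
      omega
    refine ⟨A, h, ?_, ?_⟩
    · subst this; simp [IsLowerSet]
    · simp [← two_mul, ← Equiv.Perm.one_def]
  | succ N ih =>
    intro A h hN
    by_cases hA : ∃ x ∈ A, ∃ y ∉ A, (x : ℕ) = y + 1
    · obtain ⟨x, hx, y, hy, hxy⟩ := hA
      have hne : x ≠ y := by rintro rfl; exact hy hx
      set A' := insert y (A.erase x) with hA'
      have hyE : y ∉ A.erase x := by simp [hy]
      have hc : A'.card = A.card := by
        rw [hA', Finset.card_insert_of_notMem hyE, Finset.card_erase_add_one hx]
      have h' : A'.card = a ∧ A'ᶜ.card = b := by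
        refine ⟨hc.trans h.1, ?_⟩
        rw [Finset.card_compl, hc, ← Finset.card_compl, h.2]
      have hs : ∑ i ∈ A, ((i : ℕ) + 1) = ∑ i ∈ A', ((i : ℕ) + 1) + 1 := by
        rw [hA', Finset.sum_insert hyE, ← Finset.add_sum_erase _ _ hx]
        omega
      obtain ⟨I, hI, hl, hsg⟩ := ih A' h' (by omega)
      refine ⟨I, hI, hl, ?_⟩
      have key : enumE A h = (enumE A' h').trans (Equiv.swap x y) := by
        have hv : ∀ z, (z ∈ A' ↔ z = y ∨ (z ≠ x ∧ z ∈ A)) := by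
          intro z; simp [hA']
        apply enumE_map
        · intro z
          rw [hv, Equiv.swap_apply_def]
          split_ifs with e1 e2
          · subst e1; simp [hy, hne]
          · subst e2; simp [hx]
          · simp [e1, e2]
        · intro u hu v hw huv
          have hux : u ≠ x := by rintro rfl; rw [hv] at hu; tauto
          have hvx : v ≠ x := by rintro rfl; rw [hv] at hw; tauto
          rw [Equiv.swap_apply_def, Equiv.swap_apply_def, if_neg hux, if_neg hvx]
          rw [Fin.lt_def] at *
          rw [Ne, Fin.ext_iff] at hux hvx
          split_ifs with e1 e2 e2 <;> simp only [Fin.ext_iff] at * <;> omega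
        · intro u hu v hw huv
          have hux : u ≠ y := by rintro rfl; rw [hv] at hu; tauto
          have hvx : v ≠ y := by rintro rfl; rw [hv] at hw; tauto
          rw [Equiv.swap_apply_def, Equiv.swap_apply_def, if_neg hux, if_neg hvx]
          rw [Fin.lt_def] at *
          rw [Ne, Fin.ext_iff] at hux hvx
          split_ifs with e1 e2 e2 <;> simp only [Fin.ext_iff] at * <;> omega
      rw [key, ← Equiv.trans_assoc, Equiv.Perm.sign_trans, hsg, Equiv.Perm.sign_swap hne, hs,
        add_right_comm, pow_succ', mul_comm]
    · push Not at hA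
      refine ⟨A, h, ?_, ?_⟩
      · have : ∀ k : ℕ, ∀ x y : Fin n, (x : ℕ) = y + k → x ∈ A → y ∈ A := by
          intro k
          induction k with
          | zero => intro x y hxy hx; rwa [← Fin.ext (a := x) (b := y) (by simpa using hxy)]
          | succ k ihk =>
            intro x y hxy hx
            have := x.2
            refine ihk ⟨y + k, by omega⟩ y rfl ?_
            by_contra hc
            exact hA x hx _ hc (by simp; omega)
        intro x y hxy hx
        exact this (x - y) x y (by rw [Fin.le_def] at hxy; omega) hx
      · simp [← two_mul, ← Equiv.Perm.one_def]

theorem sign_enumE {n a b : ℕ} (A B : Finset (Fin n)) (h : A.card = a ∧ Aᶜ.card = b)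
    (h' : B.card = a ∧ Bᶜ.card = b) :
    Equiv.Perm.sign ((enumE A h).symm.trans (enumE B h')) =
      (-1) ^ (∑ i ∈ A, ((i : ℕ) + 1) + ∑ i ∈ B, ((i : ℕ) + 1)) := by
  obtain ⟨I, hI, hl, hs⟩ := exists_lower _ A h rfl
  obtain ⟨J, hJ, hl', hs'⟩ := exists_lower _ B h' rfl
  have hIJ : I = J := by
    rcases hl.total hl' with hh | hh
    · exact Finset.eq_of_subset_of_card_le (by exact_mod_cast hh) (by omega)
    · exact (Finset.eq_of_subset_of_card_le (by exact_mod_cast hh) (by omega)).symm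
  subst hIJ
  have : (enumE A h).symm.trans (enumE B h') =
      ((enumE I hI).symm.trans (enumE A h)).symm.trans ((enumE I hI).symm.trans (enumE B h')) := by
    ext x; simp
  rw [this, Equiv.Perm.sign_trans, Equiv.Perm.sign_symm, hs, hs', ← pow_add]
  have e : ∀ p q r : ℕ, (q + r + (p + r)) = (p + q) + 2 * r := by intros; ring
  rw [e, pow_add _ _ (2 * _), pow_mul]
  simp

theorem lap_eq_sum {n : ℕ} {R : Type*} [CommRing R] (X : Matrix (Fin n) (Fin n) R)
    (A B : Finset (Fin n)) :
    lap X A B = ∑ σ : Equiv.Perm (Fin n), if (∀ i, i ∈ A ↔ σ i ∈ B) then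
      ((Equiv.Perm.sign σ : ℤ) : R) * ∏ i, X i (σ i) else 0 := by
  have hdet : (∑ σ : Equiv.Perm (Fin n), if (∀ i, i ∈ A ↔ σ i ∈ B) then
      ((Equiv.Perm.sign σ : ℤ) : R) * ∏ i, X i (σ i) else 0) =
      (Matrix.of fun i j => if (i ∈ A ↔ j ∈ B) then X i j else 0).det := by
    rw [← Matrix.det_transpose, Matrix.det_apply']
    refine Finset.sum_congr rfl fun σ _ => ?_
    simp only [Matrix.transpose_apply, Matrix.of_apply]
    split_ifs with hσ
    · simp [hσ]
    · push Not at hσ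
      obtain ⟨i, hi⟩ := hσ
      rw [Finset.prod_eq_zero (Finset.mem_univ i), mul_zero]
      rw [if_neg]; tauto
  by_cases h : A.card = B.card
  · have hc : Aᶜ.card = Bᶜ.card := by simp [Finset.card_compl, h]
    rw [hdet]
    set Y : Matrix (Fin n) (Fin n) R := Matrix.of fun i j => if (i ∈ A ↔ j ∈ B) then X i j else 0
      with hY
    set eA := enumE A ⟨rfl, rfl⟩ with heA
    set eB := enumE B ⟨h.symm, hc.symm⟩ with heB
    have d1 : (Y.submatrix eA eB).det = minorM X A B * minorM X Aᶜ Bᶜ := by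
      rw [minorM, minorM, dif_pos h, dif_pos hc, ← Matrix.det_fromBlocks_zero₂₁ _ 0]
      congr 1
      have mc : ∀ (S : Finset (Fin n)) (k : ℕ) (hk : Sᶜ.card = k) i,
          Sᶜ.orderEmbOfFin hk i ∉ S := fun S k hk i =>
        Finset.mem_compl.1 (Finset.orderEmbOfFin_mem _ _ _)
      ext i j
      rcases i with i | i <;> rcases j with j | j <;>
        simp [hY, heA, heB, enumE, mc]
    have d2 : (Y.submatrix eA eB).det =
        ((Equiv.Perm.sign (eA.symm.trans eB) : ℤ) : R) * Y.det := by
      rw [← Matrix.det_permute', ← Matrix.det_submatrix_equiv_self eA, Matrix.submatrix_submatrix]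
      congr 1
      ext i j
      simp
    rw [sign_enumE] at d2
    rw [lap, ← d1, d2, ← mul_assoc]
    push_cast
    rw [← pow_add, ← two_mul, pow_mul]
    simp
  · rw [lap, minorM, dif_neg h, zero_mul, mul_zero]
    symm
    apply Finset.sum_eq_zero
    · intro σ _
      rw [if_neg]
      intro hσ
      apply h
      rw [← Finset.card_map σ.toEmbedding (s := A)]
      congr 1
      ext x
      rw [Finset.mem_map_equiv, hσ]; simp

/-- Corollary 1: for `C ⊆ B`,
`Σ_{C ⊆ V ⊆ B} X{A|V} = Σ_{U ⊇ A, W ⊆ C} (-1)^{|W|} X{U|B∖W}`. -/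
theorem statement6 {n : ℕ} {R : Type*} [CommRing R] (X : Matrix (Fin n) (Fin n) R)
    (A B C : Finset (Fin n)) (hC : C ⊆ B) :
    ∑ V ∈ B.powerset.filter (fun V => C ⊆ V), lap X A V =
      ∑ U ∈ Finset.univ.filter (fun U : Finset (Fin n) => A ⊆ U),
        ∑ W ∈ C.powerset, (-1 : R) ^ W.card * lap X U (B \ W) := by
  simp only [lap_eq_sum, Finset.mul_sum]
  rw [Finset.sum_comm]
  conv_rhs => rw [Finset.sum_congr rfl fun U _ => Finset.sum_comm, Finset.sum_comm]
  refine Finset.sum_congr rfl fun σ _ => ?_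
  generalize ((Equiv.Perm.sign σ : ℤ) : R) * ∏ i, X i (σ i) = t
  set S := A.map σ.toEmbedding with hS
  have hSm : ∀ i, σ i ∈ S ↔ i ∈ A := by intro i; simp [hS]
  have l1 : ∀ V : Finset (Fin n), (∀ i, i ∈ A ↔ σ i ∈ V) ↔ S = V := by
    intro V
    constructor
    · intro hh; ext x
      obtain ⟨i, rfl⟩ := σ.surjective x
      rw [hSm, hh]
    · rintro rfl i; exact (hSm i).symm
  have l2 : ∀ U V : Finset (Fin n), (∀ i, i ∈ U ↔ σ i ∈ V) ↔ V.map σ.symm.toEmbedding = U := by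
    intro U V
    constructor
    · intro hh; ext x
      rw [hh, Finset.mem_map_equiv]; simp
    · rintro rfl i; rw [Finset.mem_map_equiv]; simp
  have l3 : ∀ W, A ⊆ (B \ W).map σ.symm.toEmbedding ↔ S ⊆ B ∧ Disjoint W S := by
    intro W
    have : A ⊆ (B \ W).map σ.symm.toEmbedding ↔ S ⊆ B \ W := by
      constructor
      · intro hh x hx
        obtain ⟨i, rfl⟩ := σ.surjective x
        have := hh ((hSm i).1 hx)
        rw [Finset.mem_map_equiv] at this; simpa using this
      · intro hh i hi
        rw [Finset.mem_map_equiv]; simpa using hh ((hSm i).2 hi)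
    rw [this, Finset.subset_sdiff, disjoint_comm]
  rw [Finset.sum_comm]
  simp only [l1, l2, mul_ite, mul_zero, Finset.sum_ite_eq, Finset.mem_filter, Finset.mem_univ,
    true_and, l3, Finset.mem_powerset]
  by_cases hB : S ⊆ B
  · simp only [hB, true_and]
    rw [← Finset.sum_filter]
    have : C.powerset.filter (fun W => Disjoint W S) = (C \ S).powerset := by
      ext W; simp [Finset.subset_sdiff]
    rw [this, ← Finset.sum_mul]
    have hz := congrArg (fun z : ℤ => (z : R)) (Finset.sum_powerset_neg_one_pow_card (x := C \ S))
    simp only [Int.cast_sum, Int.cast_pow, Int.cast_neg, Int.cast_one, Int.cast_ite,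
      Int.cast_zero, Finset.sdiff_eq_empty_iff_subset] at hz
    rw [hz]
    simp
  · simp [hB]
end

section
/- Let A, B ⊆ {1,…,n} with |A| = |B|. Then there exist a finite list of pairs (A₁,B₁),…,(A_k,B_k) of subsets of {1,…,n} and signs ε₁,…,ε_k ∈ {+1,−1} such that Aᵢ ≤ A, Bᵢ ≤ B, Aᵢ and Bᵢ are good for every i, and for every n×n matrix X over every commutative ring, X{A|B} = Σᵢ εᵢ·X{Aᵢ|Bᵢ}. -/
open Finset

namespace Straight

/-- Indicator of the permutations mapping `B` onto `A`. -/
def ind {n : ℕ} (A B : Finset (Fin n)) (σ : Equiv.Perm (Fin n)) : ℤ :=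
  if B.image σ = A then 1 else 0

/-- Number of elements of `S` below `k`. -/
def cnt {n : ℕ} (S : Finset (Fin n)) (k : ℕ) : ℕ := (S.filter (fun x : Fin n => (x : ℕ) < k)).card

def cle {n : ℕ} (S T : Finset (Fin n)) : Prop := ∀ k, cnt T k ≤ cnt S k

lemma cle_refl {n : ℕ} (S : Finset (Fin n)) : cle S S := fun _ => le_rfl

lemma cle_trans {n : ℕ} {S T U : Finset (Fin n)} (h : cle S T) (h' : cle T U) : cle S U :=
  fun k => (h' k).trans (h k)

lemma cle_of_subset {n : ℕ} {S T : Finset (Fin n)} (h : T ⊆ S) : cle S T :=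
  fun _ => card_le_card (filter_subset_filter _ h)

lemma cnt_top {n : ℕ} (S : Finset (Fin n)) : cnt S n = S.card := by
  unfold cnt
  rw [filter_true_of_mem]
  intro x _
  exact x.2

lemma cnt_succ {n : ℕ} (S : Finset (Fin n)) (x : Fin n) :
    cnt S (x + 1) = cnt S x + if x ∈ S then 1 else 0 := by
  unfold cnt
  have h : S.filter (fun y : Fin n => (y : ℕ) < x + 1) =
      S.filter (fun y : Fin n => (y : ℕ) < x) ∪ (if x ∈ S then {x} else ∅) := by
    ext y
    split_ifs with hx <;> simp only [mem_filter, mem_union, mem_singleton, notMem_empty, or_false]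
    · constructor
      · rintro ⟨h1, h2⟩
        by_cases h : y = x
        · exact Or.inr h
        · exact Or.inl ⟨h1, by have : (y : ℕ) ≠ x := fun h' => h (Fin.ext h'); omega⟩
      · rintro (⟨h1, h2⟩ | rfl)
        · exact ⟨h1, by omega⟩
        · exact ⟨hx, by omega⟩
    · constructor
      · rintro ⟨h1, h2⟩
        have : (y : ℕ) ≠ x := fun h' => hx (Fin.ext h' ▸ h1)
        exact ⟨h1, by omega⟩
      · rintro ⟨h1, h2⟩
        exact ⟨h1, by omega⟩
  rw [h, card_union_of_disjoint]
  · split_ifs <;> simp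
  · split_ifs <;> simp

lemma eq_of_cnt {n : ℕ} {S T : Finset (Fin n)} (h : ∀ k, cnt S k = cnt T k) : S = T := by
  ext x
  have h1 := cnt_succ S x
  have h2 := cnt_succ T x
  rw [h, h x] at h1
  by_cases hS : x ∈ S <;> by_cases hT : x ∈ T <;> simp_all

lemma domLE_of_cle {n : ℕ} {S T : Finset (Fin n)} (h : cle S T) : domLE S T := by
  refine ⟨?_, ?_⟩
  · have := h n
    rwa [cnt_top, cnt_top] at this
  · intro ν hT hS
    by_contra hlt
    push Not at hlt
    have hT' : ν < T.card := by simpa using hT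
    have hS' : ν < S.card := by simpa using hS
    have eT : (T.sort (· ≤ ·))[ν] = T.orderEmbOfFin rfl ⟨ν, hT'⟩ := by
      rw [orderEmbOfFin_apply]; rfl
    have eS : (S.sort (· ≤ ·))[ν] = S.orderEmbOfFin rfl ⟨ν, hS'⟩ := by
      rw [orderEmbOfFin_apply]; rfl
    rw [eT, eS] at hlt
    set t := T.orderEmbOfFin rfl ⟨ν, hT'⟩ with ht
    have h1 : ν + 1 ≤ cnt T (t + 1) := by
      have : ((Finset.Iic (⟨ν, hT'⟩ : Fin T.card)).image (T.orderEmbOfFin rfl)).card ≤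
          cnt T (t + 1) := by
        apply card_le_card
        intro x hx
        obtain ⟨i, hi, rfl⟩ := mem_image.1 hx
        rw [mem_filter]
        refine ⟨orderEmbOfFin_mem _ _ _, ?_⟩
        have : T.orderEmbOfFin rfl i ≤ t := (T.orderEmbOfFin rfl).monotone (mem_Iic.1 hi)
        have := Fin.le_def.1 this
        omega
      rw [card_image_of_injective _ (T.orderEmbOfFin rfl).injective, Fin.card_Iic] at this
      exact this
    have h2 : cnt S (t + 1) ≤ ν := by
      have : cnt S (t + 1) ≤
          ((Finset.Iio (⟨ν, hS'⟩ : Fin S.card)).image (S.orderEmbOfFin rfl)).card := by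
        apply card_le_card
        intro x hx
        rw [mem_filter] at hx
        have hx1 : x ∈ Set.range (S.orderEmbOfFin rfl) := by
          rw [range_orderEmbOfFin]; exact hx.1
        obtain ⟨i, rfl⟩ := hx1
        refine mem_image_of_mem _ (mem_Iio.2 ?_)
        by_contra hi
        have hh : S.orderEmbOfFin rfl ⟨ν, hS'⟩ ≤ S.orderEmbOfFin rfl i :=
          (S.orderEmbOfFin rfl).monotone (not_lt.1 hi)
        have h3 := Fin.le_def.1 hh
        have h4 := Fin.lt_def.1 hlt
        omega
      rw [card_image_of_injective _ (S.orderEmbOfFin rfl).injective, Fin.card_Iio] at this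
      exact this
    have := h (t + 1)
    omega

lemma exists_bad {n : ℕ} {A : Finset (Fin n)} (h : ¬ goodSet A) : ∃ k, cnt A k < cnt Aᶜ k := by
  by_contra hc
  push Not at hc
  exact h (domLE_of_cle hc)

/-- The size measure for the induction. -/
def mu {n : ℕ} (S : Finset (Fin n)) : ℕ := ∑ k ∈ range (n + 1), cnt S k

lemma mu_le {n : ℕ} (S : Finset (Fin n)) : mu S ≤ (n + 1) * n := by
  have : mu S ≤ ∑ k ∈ range (n + 1), n := by
    apply sum_le_sum
    intro k _
    exact (card_le_univ _).trans (by simp)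
  simpa using this

lemma mu_mono {n : ℕ} {S T : Finset (Fin n)} (h : cle S T) : mu T ≤ mu S :=
  sum_le_sum fun k _ => h k

lemma cnt_large {n : ℕ} (S : Finset (Fin n)) {k : ℕ} (hk : n ≤ k) : cnt S k = cnt S n := by
  unfold cnt
  congr 1
  apply filter_congr
  intro x _
  have := x.2
  constructor <;> intro <;> omega

lemma mu_lt {n : ℕ} {S T : Finset (Fin n)} (h : cle S T) (hne : S ≠ T) : mu T < mu S := by
  refine lt_of_le_of_ne (mu_mono h) fun he => hne ?_
  have h1 := (sum_eq_sum_iff_of_le (s := range (n + 1)) (fun k _ => h k)).1 he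
  apply eq_of_cnt
  intro k
  by_cases hk : k ≤ n
  · exact (h1 k (mem_range.2 (by omega))).symm
  · rw [cnt_large S (by omega), cnt_large T (by omega)]
    exact (h1 n (mem_range.2 (by omega))).symm

lemma ind_card {n : ℕ} {A B : Finset (Fin n)} (h : A.card ≠ B.card) : ind A B = 0 := by
  funext σ
  unfold ind
  rw [if_neg]
  · rfl
  · rintro rfl
    exact h (card_image_of_injective _ σ.injective)

lemma sum_sup {n : ℕ} (A B : Finset (Fin n)) (σ : Equiv.Perm (Fin n)) :
    ∑ B' ∈ univ.filter (fun B' => B ⊆ B'), ind A B' σ = if B.image σ ⊆ A then 1 else 0 := by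
  unfold ind
  have key : ∀ B' : Finset (Fin n), B'.image σ = A ↔ B' = A.image σ.symm := by
    intro B'
    constructor
    · rintro rfl; simp [image_image]
    · rintro rfl; simp [image_image]
  simp only [key]
  rw [sum_ite_eq']
  simp only [mem_filter, mem_univ, true_and]
  congr 1
  apply propext
  constructor
  · intro h x hx
    obtain ⟨b, hb, rfl⟩ := mem_image.1 hx
    obtain ⟨a, ha, hab⟩ := mem_image.1 (h hb)
    rw [← hab]; simpa using ha
  · intro h b hb
    exact mem_image.2 ⟨σ b, h (mem_image_of_mem _ hb), by simp⟩

lemma alt_sum {n : ℕ} (A0 U S : Finset (Fin n)) (hU : S.card < U.card) :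
    ∑ T ∈ U.powerset, (-1 : ℤ) ^ T.card * (if S ⊆ A0 ∪ T then 1 else 0) = 0 := by
  obtain ⟨u, hu, huS⟩ := exists_mem_notMem_of_card_lt_card hU
  rw [← insert_erase hu, sum_powerset_insert (notMem_erase u U), ← sum_add_distrib]
  apply sum_eq_zero
  intro T hT
  have huT : u ∉ T := fun h => notMem_erase u U (mem_powerset.1 hT h)
  have : S ⊆ A0 ∪ insert u T ↔ S ⊆ A0 ∪ T := by
    constructor
    · intro h x hx
      have := h hx
      simp only [mem_union, mem_insert] at this ⊢
      rcases this with h | rfl | h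
      · exact Or.inl h
      · exact absurd hx huS
      · exact Or.inr h
    · exact fun h => h.trans (union_subset_union_right (subset_insert _ _))
  rw [card_insert_of_notMem huT]
  simp only [this]
  ring

lemma straighten {n : ℕ} {A B : Finset (Fin n)} (hAB : A.card = B.card) (hbad : ¬ goodSet A)
    (H : AddSubgroup (Equiv.Perm (Fin n) → ℤ))
    (hH : ∀ A' B', A'.card = B'.card → cle A' A → cle B' B → A' ≠ A → ind A' B' ∈ H) :
    ind A B ∈ H := by
  obtain ⟨m, hm⟩ := exists_bad hbad
  set A0 := A.filter (fun x : Fin n => (x : ℕ) < m) with hA0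
  set A1 := A.filter (fun x : Fin n => ¬ (x : ℕ) < m) with hA1
  set D := Aᶜ.filter (fun x : Fin n => (x : ℕ) < m) with hD
  have hc : A0.card + A1.card = A.card := card_filter_add_card_filter_not _
  have hmD : A0.card < D.card := hm
  have hdis : Disjoint D A1 := by
    rw [disjoint_left]
    intro x hx hx'
    simp only [hD, hA1, mem_filter] at hx hx'
    exact hx'.2 hx.2
  have hA01 : A0 ∪ A1 = A := filter_union_filter_not_eq _ _
  set U := D ∪ A1 with hU
  have hUc : U.card = D.card + A1.card := card_union_of_disjoint hdis
  have hA0U : Disjoint A0 U := by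
    rw [disjoint_left]
    intro x hx hx'
    simp only [hU, hD, hA1, hA0, mem_filter, mem_union, mem_compl] at hx hx'
    tauto
  -- the identity
  have hid : ∑ p ∈ U.powerset ×ˢ (univ.filter (fun B' => B ⊆ B')),
      (-1 : ℤ) ^ p.1.card • ind (A0 ∪ p.1) p.2 = 0 := by
    funext σ
    rw [sum_product]
    simp only [Finset.sum_apply, Pi.smul_apply, smul_eq_mul, ← mul_sum, sum_sup, Pi.zero_apply]
    apply alt_sum
    rw [card_image_of_injective _ σ.injective]
    omega
  have hmem : (A1, B) ∈ U.powerset ×ˢ (univ.filter (fun B' => B ⊆ B')) := by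
    rw [mem_product, mem_powerset]
    exact ⟨subset_union_right, by simp⟩
  rw [← add_sum_erase _ _ hmem] at hid
  have hrest : ∑ p ∈ (U.powerset ×ˢ (univ.filter (fun B' => B ⊆ B'))).erase (A1, B),
      (-1 : ℤ) ^ p.1.card • ind (A0 ∪ p.1) p.2 ∈ H := by
    apply H.sum_mem
    rintro ⟨T, B'⟩ hp
    apply H.zsmul_mem
    simp only [mem_erase, mem_product, mem_powerset, mem_filter, mem_univ, true_and, ne_eq,
      Prod.mk.injEq, not_and] at hp
    obtain ⟨hne, hT, hB'⟩ := hp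
    change ind (A0 ∪ T) B' ∈ H
    by_cases hcard : (A0 ∪ T).card = B'.card
    swap
    · rw [ind_card hcard]; exact H.zero_mem
    have hdT : Disjoint A0 T := disjoint_of_subset_right hT hA0U
    have hcT := card_union_of_disjoint hdT
    have hBB := card_le_card hB'
    apply hH _ _ hcard
    · intro k
      by_cases hk : k ≤ m
      · have : A.filter (fun x : Fin n => (x : ℕ) < k) ⊆ (A0 ∪ T).filter (fun x : Fin n => (x : ℕ) < k) := by
          intro x hx
          simp only [hA0, mem_filter, mem_union] at hx ⊢
          exact ⟨Or.inl ⟨hx.1, by omega⟩, hx.2⟩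
        exact card_le_card this
      · have h1 : cnt A k + (A.filter (fun x : Fin n => ¬ (x : ℕ) < k)).card = A.card :=
          card_filter_add_card_filter_not _
        have h2 : cnt (A0 ∪ T) k + ((A0 ∪ T).filter (fun x : Fin n => ¬ (x : ℕ) < k)).card
            = (A0 ∪ T).card := card_filter_add_card_filter_not _
        have h3 : (A0 ∪ T).filter (fun x : Fin n => ¬ (x : ℕ) < k) ⊆
            A.filter (fun x : Fin n => ¬ (x : ℕ) < k) := by
          intro x hx
          simp only [mem_filter, mem_union] at hx ⊢
          refine ⟨?_, hx.2⟩
          rcases hx.1 with h | h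
          · exact (mem_filter.1 h).1
          · have := hT h
            simp only [hU, hD, hA1, mem_union, mem_filter] at this
            rcases this with h | h
            · omega
            · exact h.1
        have h4 := card_le_card h3
        omega
    · exact cle_of_subset hB'
    · intro he
      have hTA : T = A1 := by
        have h1 : T = (A0 ∪ T) \ A0 := by
          rw [union_sdiff_left, sdiff_eq_self_of_disjoint hdT.symm]
        have hd1 : Disjoint A0 A1 := disjoint_of_subset_right subset_union_right hA0U
        rw [h1, he, ← hA01, union_sdiff_left, sdiff_eq_self_of_disjoint hd1.symm]
      apply hne hTA
      symm
      apply eq_of_subset_of_card_le hB'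
      rw [← hcard, he, hAB]
  have h0 := eq_neg_of_add_eq_zero_left hid
  have h1 : (-1 : ℤ) ^ A1.card • ind A B ∈ H := by
    have : (-1 : ℤ) ^ A1.card • ind (A0 ∪ A1) B ∈ H := by
      rw [h0]; exact H.neg_mem hrest
    rwa [hA01] at this
  rcases neg_one_pow_eq_or ℤ A1.card with h | h
  · rwa [h, one_smul] at h1
  · rw [h, neg_smul, one_smul] at h1
    simpa using H.neg_mem h1

lemma ind_inv {n : ℕ} (A B : Finset (Fin n)) (σ : Equiv.Perm (Fin n)) :
    ind A B σ⁻¹ = ind B A σ := by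
  unfold ind
  congr 1
  apply propext
  constructor
  · rintro rfl; simp [image_image, Function.comp_def]
  · rintro rfl; simp [image_image, Function.comp_def]

/-- Precomposition with inversion. -/
def invHom (n : ℕ) : (Equiv.Perm (Fin n) → ℤ) →+ (Equiv.Perm (Fin n) → ℤ) where
  toFun g := fun σ => g σ⁻¹
  map_zero' := rfl
  map_add' _ _ := rfl

lemma invHom_ind {n : ℕ} (A B : Finset (Fin n)) : invHom n (ind A B) = ind B A :=
  funext fun σ => ind_inv A B σ

/-- Span of the good indicators below `(A, B)`. -/
def gspan {n : ℕ} (A B : Finset (Fin n)) : AddSubgroup (Equiv.Perm (Fin n) → ℤ) :=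
  AddSubgroup.closure {g | ∃ A' B', cle A' A ∧ cle B' B ∧ goodSet A' ∧ goodSet B' ∧ g = ind A' B'}

lemma gspan_mono {n : ℕ} {A B A' B' : Finset (Fin n)} (hA : cle A' A) (hB : cle B' B) :
    gspan A' B' ≤ gspan A B := by
  apply AddSubgroup.closure_mono
  rintro g ⟨A1, B1, h1, h2, h3⟩
  exact ⟨A1, B1, cle_trans h1 hA, cle_trans h2 hB, h3⟩

lemma mem_gspan {n : ℕ} (N : ℕ) : ∀ A B : Finset (Fin n), A.card = B.card →
    2 * ((n + 1) * n) - (mu A + mu B) < N → ind A B ∈ gspan A B := by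
  induction N with
  | zero => intro A B _ h; omega
  | succ N ih =>
    intro A B hAB hN
    by_cases hA : goodSet A
    · by_cases hB : goodSet B
      · exact AddSubgroup.subset_closure ⟨A, B, cle_refl A, cle_refl B, hA, hB, rfl⟩
      · have := straighten (A := B) (B := A) hAB.symm hB ((gspan A B).comap (invHom n)) ?_
        · rw [AddSubgroup.mem_comap, invHom_ind] at this
          exact this
        · intro B' A' hc hB' hA' hne
          rw [AddSubgroup.mem_comap, invHom_ind]
          apply gspan_mono hA' hB'
          apply ih _ _ hc.symm
          have h1 := mu_lt hB' hne
          have h2 := mu_mono hA'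
          have h3 := mu_le A'
          have h4 := mu_le B'
          omega
    · apply straighten hAB hA
      intro A' B' hc hA' hB' hne
      apply gspan_mono hA' hB'
      apply ih _ _ hc
      have h1 := mu_lt hA' hne
      have h2 := mu_mono hB'
      have h3 := mu_le A'
      have h4 := mu_le B'
      omega

lemma expand {n : ℕ} {A B : Finset (Fin n)} {g : Equiv.Perm (Fin n) → ℤ} (hg : g ∈ gspan A B) :
    ∃ (k : ℕ) (A' B' : Fin k → Finset (Fin n)) (ε : Fin k → ℤ),
      (∀ i, ε i = 1 ∨ ε i = -1) ∧
      (∀ i, domLE (A' i) A ∧ domLE (B' i) B ∧ goodSet (A' i) ∧ goodSet (B' i)) ∧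
      ∀ σ, g σ = ∑ i, ε i * ind (A' i) (B' i) σ := by
  induction hg using AddSubgroup.closure_induction with
  | mem g h =>
    obtain ⟨A', B', h1, h2, h3, h4, rfl⟩ := h
    refine ⟨1, fun _ => A', fun _ => B', fun _ => 1, fun _ => Or.inl rfl,
      fun _ => ⟨domLE_of_cle h1, domLE_of_cle h2, h3, h4⟩, ?_⟩
    intro σ; simp
  | zero =>
    exact ⟨0, fun _ => ∅, fun _ => ∅, fun _ => 1, fun i => i.elim0, fun i => i.elim0,
      fun σ => by simp⟩
  | add g g' _ _ h h' =>
    obtain ⟨k, A1, B1, e1, h1, h2, h3⟩ := h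
    obtain ⟨l, A2, B2, e2, h4, h5, h6⟩ := h'
    refine ⟨k + l, Fin.append A1 A2, Fin.append B1 B2, Fin.append e1 e2, ?_, ?_, ?_⟩
    · intro i
      refine Fin.addCases (fun i => ?_) (fun i => ?_) i
      · simpa using h1 i
      · simpa using h4 i
    · intro i
      refine Fin.addCases (fun i => ?_) (fun i => ?_) i
      · simpa using h2 i
      · simpa using h5 i
    · intro σ
      rw [Fin.sum_univ_add]
      simp [h3, h6]
  | neg g _ h =>
    obtain ⟨k, A1, B1, e1, h1, h2, h3⟩ := h
    refine ⟨k, A1, B1, fun i => - e1 i, ?_, h2, ?_⟩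
    · intro i
      rcases h1 i with h | h <;> simp [h]
    · intro σ
      simp [h3]

/-- The signed permutation sum attached to a function on permutations. -/
def psum {n : ℕ} {R : Type*} [CommRing R] (X : Matrix (Fin n) (Fin n) R)
    (g : Equiv.Perm (Fin n) → ℤ) : R :=
  ∑ σ : Equiv.Perm (Fin n), (g σ : R) * (((Equiv.Perm.sign σ : ℤ) : R) * ∏ i, X (σ i) i)

lemma image_eq_iff {n : ℕ} (A B : Finset (Fin n)) (σ : Equiv.Perm (Fin n)) :
    B.image σ = A ↔ ∀ i, (σ i ∈ A ↔ i ∈ B) := by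
  constructor
  · rintro rfl i
    simp
  · intro h
    ext x
    have := h (σ.symm x)
    rw [Equiv.apply_symm_apply] at this
    rw [this, mem_image]
    constructor
    · rintro ⟨a, ha, rfl⟩; simpa using ha
    · intro hx; exact ⟨_, hx, by simp⟩

lemma det_mask {n : ℕ} {R : Type*} [CommRing R] (X : Matrix (Fin n) (Fin n) R)
    (A B : Finset (Fin n)) :
    (Matrix.of fun i j : Fin n => if (i ∈ A ↔ j ∈ B) then X i j else 0).det
      = psum X (ind A B) := by
  rw [Matrix.det_apply']
  unfold psum
  apply sum_congr rfl
  intro σ _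
  simp only [Matrix.of_apply]
  unfold ind
  by_cases h : B.image σ = A
  · rw [if_pos h]
    rw [image_eq_iff] at h
    simp [h]
  · rw [if_neg h]
    rw [image_eq_iff] at h
    push Not at h
    obtain ⟨i, hi⟩ := h
    rw [prod_eq_zero (mem_univ i)]
    · simp
    · rw [if_neg]; tauto

lemma lap_eq {n : ℕ} (A B : Finset (Fin n)) : ∃ s : ℤ, (s = 1 ∨ s = -1) ∧
    ∀ (R : Type*) [CommRing R] (X : Matrix (Fin n) (Fin n) R),
      lap X A B = (s : R) * psum X (ind A B) := by
  by_cases h : A.card = B.card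
  swap
  · refine ⟨1, Or.inl rfl, ?_⟩
    intro R _ X
    rw [ind_card h]
    simp [lap, minorM, h, psum]
  have hc : Aᶜ.card = Bᶜ.card := by rw [card_compl, card_compl, h]
  let e1 : Fin A.card ⊕ Fin Aᶜ.card ≃ Fin n := finSumEquivOfFinset rfl rfl
  let e2 : Fin A.card ⊕ Fin Aᶜ.card ≃ Fin n := finSumEquivOfFinset h.symm hc.symm
  let π : Equiv.Perm (Fin n) := e1.symm.trans e2
  refine ⟨(-1) ^ (∑ i ∈ A, ((i : ℕ) + 1) + ∑ j ∈ B, ((j : ℕ) + 1)) * (Equiv.Perm.sign π : ℤ),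
    ?_, ?_⟩
  · rcases neg_one_pow_eq_or ℤ (∑ i ∈ A, ((i : ℕ) + 1) + ∑ j ∈ B, ((j : ℕ) + 1)) with h1 | h1 <;>
    rcases Int.units_eq_one_or (Equiv.Perm.sign π) with h2 | h2 <;> rw [h1, h2] <;> simp
  · intro R _ X
    unfold lap
    push_cast
    rw [mul_assoc]
    congr 1
    rw [← det_mask, ← Matrix.det_permute', ← Matrix.det_submatrix_equiv_self e1]
    rw [minorM, minorM, dif_pos h, dif_pos hc, ← Matrix.det_fromBlocks_zero₂₁ _ 0]
    congr 1
    have memA : ∀ i, e1 (Sum.inl i) ∈ A := fun i => orderEmbOfFin_mem _ rfl _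
    have memA' : ∀ i, e1 (Sum.inr i) ∉ A :=
      fun i => mem_compl.1 (orderEmbOfFin_mem _ rfl _)
    have memB : ∀ i, e2 (Sum.inl i) ∈ B := fun i => orderEmbOfFin_mem _ h.symm _
    have memB' : ∀ i, e2 (Sum.inr i) ∉ B :=
      fun i => mem_compl.1 (orderEmbOfFin_mem _ hc.symm _)
    have hπ : ∀ x, π (e1 x) = e2 x := fun x => by simp [π]
    ext i j
    rcases i with i | i <;> rcases j with j | j <;>
      simp only [Matrix.submatrix_apply, Matrix.of_apply, id_eq, hπ, memA, memA', memB, memB',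
        Matrix.fromBlocks_apply₁₁, Matrix.fromBlocks_apply₁₂, Matrix.fromBlocks_apply₂₁,
        Matrix.fromBlocks_apply₂₂, iff_true, iff_false, not_true_eq_false, if_true, if_false,
        Matrix.zero_apply, true_iff, not_false_eq_true] <;> rfl

end Straight

/-- Theorem 2 (straightening law for Laplace products): `X{A|B} = Σᵢ ±X{Aᵢ|Bᵢ}` where
`Aᵢ ≤ A`, `Bᵢ ≤ B`, and all `Aᵢ`, `Bᵢ` are good; the same signed combination works for
every `n×n` matrix over every commutative ring. -/
theorem statement9 {n : ℕ} (A B : Finset (Fin n)) (hAB : A.card = B.card) :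
    ∃ (k : ℕ) (A' B' : Fin k → Finset (Fin n)) (ε : Fin k → ℤ),
      (∀ i, ε i = 1 ∨ ε i = -1) ∧
      (∀ i, domLE (A' i) A ∧ domLE (B' i) B ∧ goodSet (A' i) ∧ goodSet (B' i)) ∧
      ∀ (R : Type*) [CommRing R] (X : Matrix (Fin n) (Fin n) R),
        lap X A B = ∑ i, (ε i : R) * lap X (A' i) (B' i) := by
  obtain ⟨k, A', B', ε, h1, h2, h3⟩ :=
    Straight.expand (Straight.mem_gspan _ A B hAB (Nat.lt_succ_self _))
  obtain ⟨s, hs, hlap⟩ := Straight.lap_eq A B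
  choose t ht hlap' using fun i => Straight.lap_eq (A' i) (B' i)
  refine ⟨k, A', B', fun i => s * ε i * t i, ?_, h2, ?_⟩
  · intro i
    rcases hs with h | h <;> rcases h1 i with h' | h' <;> rcases ht i with h'' | h'' <;>
      simp [h, h', h'']
  · intro R _ X
    rw [hlap]
    have key : Straight.psum X (Straight.ind A B)
        = ∑ i, (ε i : R) * Straight.psum X (Straight.ind (A' i) (B' i)) := by
      unfold Straight.psum
      simp only [mul_sum]
      rw [sum_comm]
      apply sum_congr rfl
      intro σ _
      rw [h3 σ]
      push_cast
      rw [sum_mul]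
      apply sum_congr rfl
      intro i _
      ring
    rw [key, mul_sum]
    apply sum_congr rfl
    intro i _
    rw [hlap']
    have htt : (t i : R) * (t i : R) = 1 := by
      rcases ht i with h | h <;> simp [h]
    push_cast
    linear_combination (-(s : R) * ε i * Straight.psum X (Straight.ind (A' i) (B' i))) * htt
end

section
/- Let S′, T′, S″, T″ be subsets with S′, S″ ⊆ {1,…,m} and T′, T″ ⊆ {1,…,n}, and suppose it is not the case that both S′ ≤ S″ and T′ ≤ T″. Then there exist a finite list of quadruples (S′ᵢ, T′ᵢ, S″ᵢ, T″ᵢ) of subsets (S′ᵢ, S″ᵢ ⊆ {1,…,m}, T′ᵢ, T″ᵢ ⊆ {1,…,n}) and signs εᵢ ∈ {+1,−1} such that (S′ᵢ, T′ᵢ) < (S′, T′), (S′ᵢ, T′ᵢ) ≤ (S″ᵢ, T″ᵢ), and for every m×n matrix X over every commutative ring, X(S′|T′)·X(S″|T″) = Σᵢ εᵢ·X(S′ᵢ|T′ᵢ)·X(S″ᵢ|T″ᵢ). -/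
open Finset

/-- number of elements of `G` below `k` -/
def cntB (G : Finset ℕ) (k : ℕ) : ℕ := (G.filter (· < k)).card
/-- dominance order by counting -/
def bLE (G H : Finset ℕ) : Prop := ∀ k, cntB H k ≤ cntB G k
/-- ballot sets -/
def ballot (N : ℕ) (G : Finset ℕ) : Prop := ∀ k ≤ N, k ≤ 2 * cntB G k
/-- sum of all `j`-subsets -/
noncomputable def DD (j : ℕ) (G : Finset ℕ) : Finset ℕ →₀ ℤ :=
  ∑ V ∈ G.powersetCard j, Finsupp.single V 1
noncomputable def II (N j : ℕ) (G : Finset ℕ) : Submodule ℤ (Finset ℕ →₀ ℤ) :=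
  Submodule.span ℤ {x | ∃ G', G' ⊆ range N ∧ ballot N G' ∧ N ≤ G'.card + j ∧ bLE G' G ∧ x = DD j G'}
noncomputable def insz (z : ℕ) : (Finset ℕ →₀ ℤ) →ₗ[ℤ] (Finset ℕ →₀ ℤ) :=
  Finsupp.lmapDomain ℤ ℤ (insert z)
noncomputable def opD (j : ℕ) : (Finset ℕ →₀ ℤ) →ₗ[ℤ] (Finset ℕ →₀ ℤ) :=
  Finsupp.linearCombination ℤ (DD j)

lemma bLE.refl (G : Finset ℕ) : bLE G G := fun _ => le_rfl
lemma bLE.trans {A B C : Finset ℕ} (h : bLE A B) (h' : bLE B C) : bLE A C :=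
  fun k => (h' k).trans (h k)

lemma cntB_mono {A B : Finset ℕ} (h : A ⊆ B) (k : ℕ) : cntB A k ≤ cntB B k :=
  card_le_card (filter_subset_filter _ h)

lemma bLE_of_subset {A B : Finset ℕ} (h : B ⊆ A) : bLE A B := cntB_mono h

lemma cntB_card {N : ℕ} {A : Finset ℕ} (h : A ⊆ range N) {k : ℕ} (hk : N ≤ k) :
    cntB A k = A.card := by
  unfold cntB
  rw [filter_true_of_mem]
  intro x hx
  have := mem_range.1 (h hx)
  omega

lemma cntB_le_card (A : Finset ℕ) (k : ℕ) : cntB A k ≤ A.card := card_filter_le _ _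

lemma cntB_insert {A : Finset ℕ} {z k : ℕ} (h : z ∉ A) :
    cntB (insert z A) k = cntB A k + if z < k then 1 else 0 := by
  unfold cntB
  rw [filter_insert]
  split_ifs
  · rw [card_insert_of_notMem (by simp [h])]
  · simp

lemma bLE_card {N : ℕ} {A B : Finset ℕ} (hA : A ⊆ range N) (hB : B ⊆ range N) (h : bLE A B) :
    B.card ≤ A.card := by
  have := h N
  rwa [cntB_card hA le_rfl, cntB_card hB le_rfl] at this

lemma not_mem_of_range {N : ℕ} {A : Finset ℕ} (hA : A ⊆ range N) : N ∉ A := by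
  intro h; have := hA h; simp at this

lemma insert_range {N : ℕ} {A : Finset ℕ} (hA : A ⊆ range N) : insert N A ⊆ range (N+1) := by
  rw [range_add_one]; exact insert_subset_insert _ hA

lemma subset_range_succ {N : ℕ} {A : Finset ℕ} (hA : A ⊆ range N) : A ⊆ range (N+1) := by
  rw [range_add_one]; exact hA.trans (subset_insert _ _)

lemma ballot_succ {N : ℕ} {A : Finset ℕ} (hA : A ⊆ range N) (hb : ballot N A)
    (hc : N + 1 ≤ 2 * A.card) : ballot (N+1) A := by
  intro k hk
  rcases Nat.lt_or_ge N k with h | h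
  · have : k = N + 1 := by omega
    subst this
    rw [cntB_card hA (by omega)]; exact hc
  · exact hb k h

lemma ballot_insert {N : ℕ} {A : Finset ℕ} (hA : A ⊆ range N) (hb : ballot N A) :
    ballot (N+1) (insert N A) := by
  intro k hk
  rw [cntB_insert (not_mem_of_range hA)]
  rcases Nat.lt_or_ge N k with h | h
  · have : k = N + 1 := by omega
    subst this
    have := hb N le_rfl
    rw [cntB_card hA le_rfl] at this
    rw [cntB_card hA (by omega)]; simp; omega
  · have := hb k h; omega

/-- comparing with `insert N B`. -/
lemma bLE_insert {N : ℕ} {A B : Finset ℕ} (hA : A ⊆ range N) (hB : B ⊆ range N) (h : bLE A B)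
    (hc : B.card < A.card) : bLE A (insert N B) := by
  intro k
  rw [cntB_insert (not_mem_of_range hB)]
  split_ifs with hk
  · rw [cntB_card hA hk.le, cntB_card hB hk.le]; omega
  · simpa using h k

lemma bLE_insert_insert {N : ℕ} {A B : Finset ℕ} (hA : A ⊆ range N) (hB : B ⊆ range N)
    (h : bLE A B) : bLE (insert N A) (insert N B) := by
  intro k
  rw [cntB_insert (not_mem_of_range hB), cntB_insert (not_mem_of_range hA)]
  have := h k; omega

lemma DD_eq_zero {j : ℕ} {G : Finset ℕ} (h : G.card < j) : DD j G = 0 := by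
  unfold DD; rw [powersetCard_eq_empty.2 h]; simp

lemma DD_self (G : Finset ℕ) : DD G.card G = Finsupp.single G 1 := by
  unfold DD; rw [powersetCard_self]; simp

lemma DD_zero (G : Finset ℕ) : DD 0 G = Finsupp.single ∅ 1 := by
  unfold DD; simp

lemma DD_insert {j z : ℕ} {G : Finset ℕ} (h : z ∉ G) :
    DD (j+1) (insert z G) = DD (j+1) G + insz z (DD j G) := by
  unfold DD insz
  rw [powersetCard_succ_insert h, sum_union, sum_image]
  · simp [Finsupp.mapDomain_single]
  · intro a ha b hb hab
    have ha' : z ∉ a := fun hz => h ((mem_powersetCard.1 ha).1 hz)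
    have hb' : z ∉ b := fun hz => h ((mem_powersetCard.1 hb).1 hz)
    rw [← erase_insert ha', ← erase_insert hb', hab]
  · rw [disjoint_left]
    intro a ha hb
    obtain ⟨b, hb, rfl⟩ := mem_image.1 hb
    exact h ((mem_powersetCard.1 ha).1 (mem_insert_self _ _))

lemma opD_single (j : ℕ) (G : Finset ℕ) : opD j (Finsupp.single G 1) = DD j G := by
  simp [opD]

lemma opD_DD (j i : ℕ) (G : Finset ℕ) : ∃ c : ℤ, opD j (DD i G) = c • DD j G := by
  rcases Nat.lt_or_ge i j with h | h
  · refine ⟨0, ?_⟩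
    rw [DD, map_sum, zero_smul]
    refine sum_eq_zero fun V hV => ?_
    rw [opD_single, DD_eq_zero]
    rw [(mem_powersetCard.1 hV).2]; exact h
  · refine ⟨(((G.card - j).choose (i - j) : ℕ) : ℤ), ?_⟩
    rw [DD, map_sum]
    simp only [opD_single]
    unfold DD
    rw [sum_comm' (t' := G.powersetCard j)
      (s' := fun W => (G.powersetCard i).filter (fun V => W ⊆ V))]
    · rw [smul_sum]
      refine sum_congr rfl fun W hW => ?_
      rw [sum_const]
      obtain ⟨hWG, hWc⟩ := mem_powersetCard.1 hW
      have : ((G.powersetCard i).filter (fun V => W ⊆ V)).card = (G.card - j).choose (i - j) := by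
        rw [← hWc, ← card_sdiff_of_subset hWG, ← card_powersetCard]
        refine card_bij (fun V _ => V \ W) ?_ ?_ ?_
        · intro V hV
          simp only [mem_filter, mem_powersetCard] at hV ⊢
          refine ⟨sdiff_subset_sdiff hV.1.1 le_rfl, ?_⟩
          rw [card_sdiff_of_subset hV.2, hV.1.2]
        · intro V hV V' hV' hh
          simp only [mem_filter, mem_powersetCard] at hV hV'
          rw [← sdiff_union_of_subset hV.2, ← sdiff_union_of_subset hV'.2, hh]
        · intro U hU
          simp only [mem_powersetCard] at hU
          have hd : Disjoint U W := disjoint_of_subset_left hU.1 sdiff_disjoint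
          refine ⟨U ∪ W, ?_, ?_⟩
          · simp only [mem_filter, mem_powersetCard]
            refine ⟨⟨union_subset (hU.1.trans sdiff_subset) hWG, ?_⟩, subset_union_right⟩
            rw [card_union_of_disjoint hd, hU.2]; omega
          · rw [union_sdiff_right, sdiff_eq_self_of_disjoint hd]
      rw [this]; simp
    · intro V W
      simp only [mem_filter, mem_powersetCard]
      constructor
      · rintro ⟨⟨a, b⟩, c, d⟩; exact ⟨⟨⟨a, b⟩, c⟩, c.trans a, d⟩
      · rintro ⟨⟨⟨a, b⟩, c⟩, _, d⟩; exact ⟨⟨a, b⟩, c, d⟩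

lemma II_mono {N j : ℕ} {A B : Finset ℕ} (h : bLE A B) : II N j A ≤ II N j B := by
  apply Submodule.span_mono
  rintro x ⟨G', h1, h2, h3, h4, h5⟩
  exact ⟨G', h1, h2, h3, h4.trans h, h5⟩

lemma mem_II {N j : ℕ} {G G' : Finset ℕ} (h1 : G' ⊆ range N) (h2 : ballot N G')
    (h3 : N ≤ G'.card + j) (h4 : bLE G' G) : DD j G' ∈ II N j G :=
  Submodule.subset_span ⟨G', h1, h2, h3, h4, rfl⟩

/-- to check that a linear map sends `II` into a submodule -/
lemma II_map {N j : ℕ} {G : Finset ℕ} (f : (Finset ℕ →₀ ℤ) →ₗ[ℤ] (Finset ℕ →₀ ℤ))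
    (M : Submodule ℤ (Finset ℕ →₀ ℤ))
    (h : ∀ G', G' ⊆ range N → ballot N G' → N ≤ G'.card + j → bLE G' G → f (DD j G') ∈ M)
    {x : Finset ℕ →₀ ℤ} (hx : x ∈ II N j G) : f x ∈ M := by
  have : II N j G ≤ M.comap f := by
    unfold II
    rw [Submodule.span_le]
    rintro x ⟨G', h1, h2, h3, h4, rfl⟩
    exact h G' h1 h2 h3 h4
  exact this hx

def PP (N : ℕ) : Prop := ∀ G ⊆ range N, ∀ j, DD j G ∈ II N j G

lemma H2 {N : ℕ} (hP : PP N) {G : Finset ℕ} (hG : G ⊆ range N) (j : ℕ) :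
    insz N (DD j G) ∈ II (N+1) (j+1) G := by
  refine II_map (insz N) _ ?_ (hP G hG j)
  intro G' h1 h2 h3 h4
  have e : insz N (DD j G') = DD (j+1) (insert N G') - DD (j+1) G' := by
    rw [DD_insert (not_mem_of_range h1)]; abel
  rw [e]
  have hc := card_insert_of_notMem (not_mem_of_range h1)
  refine Submodule.sub_mem _ (mem_II (insert_range h1) (ballot_insert h1 h2) (by omega)
    ((bLE_of_subset (subset_insert _ _)).trans h4)) ?_
  rcases Nat.lt_or_ge G'.card (j+1) with h | h
  · rw [DD_eq_zero h]; exact Submodule.zero_mem _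
  · exact mem_II (subset_range_succ h1) (ballot_succ h1 h2 (by omega)) (by omega) h4

lemma H3 {N : ℕ} (hP : PP N) {G : Finset ℕ} (hG : G ⊆ range N) (j : ℕ) :
    DD j G ∈ II (N+1) j G := by
  refine II_map LinearMap.id _ ?_ (hP G hG j)
  intro G' h1 h2 h3 h4
  rw [LinearMap.id_apply]
  have hc := card_insert_of_notMem (not_mem_of_range h1)
  have hb : bLE (insert N G') G := (bLE_of_subset (subset_insert _ _)).trans h4
  rcases Nat.lt_or_ge G'.card j with h | h
  · rw [DD_eq_zero h]; exact Submodule.zero_mem _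
  rcases Nat.lt_or_ge (G'.card + j) (N+1) with h' | h'
  · rcases j with _ | j
    · rw [DD_zero, ← DD_zero (insert N G')]
      exact mem_II (insert_range h1) (ballot_insert h1 h2) (by omega) hb
    · have e : DD (j+1) G' = DD (j+1) (insert N G') - insz N (DD j G') := by
        rw [DD_insert (not_mem_of_range h1)]; abel
      rw [e]
      exact Submodule.sub_mem _ (mem_II (insert_range h1) (ballot_insert h1 h2) (by omega) hb)
        (II_mono h4 (H2 hP h1 j))
  · exact mem_II (subset_range_succ h1) (ballot_succ h1 h2 (by omega)) (by omega) h4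

lemma H5 {N : ℕ} (hP : PP N) {G : Finset ℕ} (hG : G ⊆ range N) (hb : ballot N G) (j : ℕ) :
    DD j (insert N G) ∈ II (N+1) j (insert N G) := by
  have hc := card_insert_of_notMem (not_mem_of_range hG)
  rcases Nat.lt_or_ge (G.card + j) N with h | h
  · rcases j with _ | j
    · rw [DD_zero, ← DD_zero (range (N+1))]
      refine mem_II le_rfl ?_ (by simp) (bLE_of_subset (insert_range hG))
      intro k hk
      have : cntB (range (N+1)) k = k := by
        unfold cntB
        have : (range (N+1)).filter (· < k) = range k := by ext; simp; omega
        rw [this, card_range]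
      omega
    · rw [DD_insert (not_mem_of_range hG)]
      refine Submodule.add_mem _ ?_ ?_
      · refine II_map LinearMap.id _ ?_ (hP G hG (j+1))
        intro G' h1 h2 h3 h4
        exact II_mono (bLE_insert h1 hG h4 (by omega)) (H3 hP h1 (j+1))
      · refine II_map (insz N) _ ?_ (hP G hG j)
        intro G' h1 h2 h3 h4
        exact II_mono (bLE_insert h1 hG h4 (by omega)) (H2 hP h1 j)
  · exact mem_II (insert_range hG) (ballot_insert hG hb) (by omega) (bLE.refl _)

lemma H4 {N : ℕ} (hP : PP N) {G : Finset ℕ} (hG : G ⊆ range N) (j : ℕ) :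
    DD j (insert N G) ∈ II (N+1) j (insert N G) := by
  have e : DD j (insert N G) = (opD j ∘ₗ insz N) (DD G.card G) := by
    rw [DD_self, LinearMap.comp_apply]
    simp [insz, Finsupp.mapDomain_single, opD_single]
  rw [e]
  refine II_map _ _ ?_ (hP G hG G.card)
  intro G' h1 h2 h3 h4
  have e : insz N (DD G.card G') = DD (G.card+1) (insert N G') - DD (G.card+1) G' := by
    rw [DD_insert (not_mem_of_range h1)]; abel
  rw [LinearMap.comp_apply, e, map_sub]
  obtain ⟨c, hc⟩ := opD_DD j (G.card+1) (insert N G')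
  obtain ⟨c', hc'⟩ := opD_DD j (G.card+1) G'
  refine Submodule.sub_mem _ ?_ ?_
  · rw [hc]
    exact Submodule.smul_mem _ _ (II_mono (bLE_insert_insert h1 hG h4) (H5 hP h1 h2 j))
  · rcases Nat.lt_or_ge G'.card (G.card+1) with h | h
    · rw [DD_eq_zero h, map_zero]; exact Submodule.zero_mem _
    · rw [hc']
      exact Submodule.smul_mem _ _ (II_mono (bLE_insert h1 hG h4 h) (H3 hP h1 j))

theorem PP_all (N : ℕ) : PP N := by
  induction N with
  | zero =>
    intro G hG j
    refine mem_II hG ?_ (by omega) (bLE.refl _)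
    intro k hk; omega
  | succ N ih =>
    intro G hG j
    by_cases h : N ∈ G
    · have h0 : G.erase N ⊆ range N := by
        intro x hx
        have h1 := mem_range.1 (hG (mem_of_mem_erase hx))
        have h2 := ne_of_mem_erase hx
        exact mem_range.2 (by omega)
      have := H4 ih h0 j
      rwa [insert_erase h] at this
    · refine H3 ih ?_ j
      intro x hx
      have h1 := mem_range.1 (hG hx)
      have h2 : x ≠ N := fun e => h (e ▸ hx)
      exact mem_range.2 (by omega)

/-- signed sum over the permutations carrying `B` to `A` -/
noncomputable def LL {N : ℕ} {R : Type*} [CommRing R] (Y : Matrix (Fin N) (Fin N) R)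
    (A B : Finset (Fin N)) : R :=
  ∑ σ : Equiv.Perm (Fin N), if B.map σ.toEmbedding = A then
    ((Equiv.Perm.sign σ : ℤ) : R) * ∏ i, Y (σ i) i else 0

lemma LL_row {N : ℕ} {R : Type*} [CommRing R] (Y : Matrix (Fin N) (Fin N) R)
    (A T : Finset (Fin N)) :
    ∑ V ∈ A.powersetCard T.card, LL Y V T = ∑ U ∈ univ.filter (T ⊆ ·), LL Y A U := by
  unfold LL
  rw [sum_comm, sum_comm (s := univ.filter (T ⊆ ·))]
  refine sum_congr rfl fun σ _ => ?_
  have e : ∀ U : Finset (Fin N), U.map σ.toEmbedding = A ↔ A.map σ.symm.toEmbedding = U := by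
    intro U
    constructor
    · rintro rfl; ext; simp
    · rintro rfl; ext; simp
  simp_rw [e]
  rw [sum_ite_eq, sum_ite_eq]
  congr 1
  simp only [mem_powersetCard, card_map, and_true, mem_filter, mem_univ, true_and, eq_iff_iff]
  constructor
  · intro h x hx
    have := h (mem_map_of_mem _ hx)
    simpa using this
  · intro h x hx
    obtain ⟨y, hy, rfl⟩ := mem_map.1 hx
    have := h hy
    simpa using this

lemma LL_col {N : ℕ} {R : Type*} [CommRing R] (Y : Matrix (Fin N) (Fin N) R)
    (A T : Finset (Fin N)) :
    ∑ V ∈ A.powersetCard T.card, LL Y T V = ∑ U ∈ univ.filter (T ⊆ ·), LL Y U A := by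
  unfold LL
  rw [sum_comm, sum_comm (s := univ.filter (T ⊆ ·))]
  refine sum_congr rfl fun σ _ => ?_
  have e : ∀ U : Finset (Fin N), U.map σ.toEmbedding = T ↔ T.map σ.symm.toEmbedding = U := by
    intro U
    constructor
    · rintro rfl; ext; simp
    · rintro rfl; ext; simp
  simp_rw [e]
  rw [sum_ite_eq, sum_ite_eq]
  congr 1
  simp only [mem_powersetCard, card_map, and_true, mem_filter, mem_univ, true_and, eq_iff_iff]
  constructor
  · intro h x hx
    have := h (mem_map_of_mem _ hx)
    simpa using this
  · intro h x hx
    obtain ⟨y, hy, rfl⟩ := mem_map.1 hx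
    have := h hy
    simpa using this

/-- transport to `ℕ` -/
def toN {N : ℕ} (A : Finset (Fin N)) : Finset ℕ := A.map Fin.valEmbedding

lemma toN_range {N : ℕ} (A : Finset (Fin N)) : toN A ⊆ range N := by
  intro x hx
  obtain ⟨y, hy, rfl⟩ := mem_map.1 hx
  simp

/-- pull back from `ℕ` -/
def pbN (N : ℕ) (V : Finset ℕ) : Finset (Fin N) := univ.filter (fun i => (i : ℕ) ∈ V)

lemma pbN_toN {N : ℕ} (A : Finset (Fin N)) : pbN N (toN A) = A := by
  ext x; simp [pbN, toN, Fin.val_inj]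

lemma toN_pbN {N : ℕ} {G : Finset ℕ} (h : G ⊆ range N) : toN (pbN N G) = G := by
  ext x
  simp only [toN, pbN, mem_map, mem_filter, mem_univ, true_and, Fin.valEmbedding_apply]
  constructor
  · rintro ⟨y, hy, rfl⟩; exact hy
  · intro hx; exact ⟨⟨x, mem_range.1 (h hx)⟩, hx, rfl⟩

lemma straighten_one {N : ℕ} {M : Type*} [AddCommGroup M] (f : Finset (Fin N) → M)
    (S : Finset (Fin N)) (W : Submodule ℤ M)
    (h : ∀ A, ballot N (toN A) → bLE (toN A) (toN S) → ∑ V ∈ A.powersetCard S.card, f V ∈ W) :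
    f S ∈ W := by
  let φ : (Finset ℕ →₀ ℤ) →ₗ[ℤ] M := Finsupp.linearCombination ℤ (fun V => f (pbN N V))
  have h1 := PP_all N (toN S) (toN_range S) (toN S).card
  have h2 : II N (toN S).card (toN S) ≤ W.comap φ := by
    unfold II
    rw [Submodule.span_le]
    rintro x ⟨G, h1, h2, h3, h4, rfl⟩
    have hG := toN_pbN h1
    have := h (pbN N G) (by rwa [hG]) (by rwa [hG])
    have e : φ (DD (toN S).card G) = ∑ V ∈ (pbN N G).powersetCard S.card, f V := by
      have : DD (toN S).card G = DD S.card (toN (pbN N G)) := by rw [hG, toN, card_map]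
      rw [this, DD, map_sum, toN, powersetCard_map, sum_map]
      refine sum_congr rfl fun V _ => ?_
      have := pbN_toN V
      unfold toN at this
      simp [φ, mapEmbedding_apply, this]
    simp only [SetLike.mem_coe, Submodule.mem_comap]
    rw [e]; exact this
  have h3 := h2 h1
  rw [Submodule.mem_comap, DD_self] at h3
  simpa [φ, pbN_toN] using h3

lemma toN_mono {N : ℕ} {A B : Finset (Fin N)} (h : A ⊆ B) : toN A ⊆ toN B := map_subset_map.2 h

lemma ballot_mono {N : ℕ} {A B : Finset ℕ} (h : A ⊆ B) (hA : ballot N A) : ballot N B := by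
  intro k hk
  have := hA k hk
  have := cntB_mono h k
  omega

theorem LL_straighten {N : ℕ} {R : Type*} [CommRing R] (Y : Matrix (Fin N) (Fin N) R)
    (S T : Finset (Fin N)) :
    LL Y S T ∈ Submodule.span ℤ {x : R | ∃ A B : Finset (Fin N), ballot N (toN A) ∧
      ballot N (toN B) ∧ bLE (toN A) (toN S) ∧ bLE (toN B) (toN T) ∧ x = LL Y A B} := by
  by_cases hST : S.card = T.card
  swap
  · have : LL Y S T = 0 := by
      unfold LL
      refine sum_eq_zero fun σ _ => if_neg ?_
      rintro rfl; simp at hST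
    rw [this]; exact Submodule.zero_mem _
  refine straighten_one (fun V => LL Y V T) S _ fun A hA hAS => ?_
  rw [hST, LL_row]
  refine Submodule.sum_mem _ fun U hU => ?_
  have hU := (mem_filter.1 hU).2
  by_cases hAU : A.card = U.card
  swap
  · have : LL Y A U = 0 := by
      unfold LL
      refine sum_eq_zero fun σ _ => if_neg ?_
      rintro rfl; simp at hAU
    rw [this]; exact Submodule.zero_mem _
  refine straighten_one (fun V => LL Y A V) U _ fun B hB hBU => ?_
  rw [← hAU, LL_col]
  refine Submodule.sum_mem _ fun A' hA' => ?_
  have hA' := (mem_filter.1 hA').2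
  exact Submodule.subset_span ⟨A', B, ballot_mono (toN_mono hA') hA, hB,
    (bLE_of_subset (toN_mono hA')).trans hAS, hBU.trans (bLE_of_subset (toN_mono hU)), rfl⟩

lemma minor_LL {N : ℕ} {R : Type*} [CommRing R] (Y : Matrix (Fin N) (Fin N) R)
    (A B : Finset (Fin N)) :
    minorM Y A B * minorM Y Aᶜ Bᶜ = LL Y A B ∨ minorM Y A B * minorM Y Aᶜ Bᶜ = - LL Y A B := by
  by_cases h : A.card = B.card
  swap
  · left
    have : LL Y A B = 0 := by
      unfold LL
      refine sum_eq_zero fun σ _ => if_neg ?_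
      rintro rfl; simp at h
    rw [this, minorM, dif_neg h, zero_mul]
  have h' : Aᶜ.card = Bᶜ.card := by rw [card_compl, card_compl, h]
  let Z : Matrix (Fin N) (Fin N) R := Matrix.of fun i j => if (i ∈ A ↔ j ∈ B) then Y i j else 0
  have hZ : Z.det = LL Y A B := by
    rw [Matrix.det_apply', LL]
    refine sum_congr rfl fun σ _ => ?_
    split_ifs with hσ
    · congr 1
      refine prod_congr rfl fun i _ => ?_
      simp only [Z, Matrix.of_apply]
      rw [if_pos]
      rw [← hσ]; simp
    · have : ∃ i, ¬ (σ i ∈ A ↔ i ∈ B) := by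
        by_contra hcon
        push Not at hcon
        apply hσ
        ext x
        have := hcon (σ.symm x)
        rw [Equiv.apply_symm_apply] at this
        rw [this]; simp
      obtain ⟨i, hi⟩ := this
      rw [prod_eq_zero (mem_univ i), mul_zero]
      simp only [Z, Matrix.of_apply]
      rw [if_neg hi]
  let eA := finSumEquivOfFinset (s := A) rfl rfl
  let eB := finSumEquivOfFinset (s := B) h.symm h'.symm
  have hdet := Matrix.det_reindex eA.symm eB.symm Z
  have hblk : Z.reindex eA.symm eB.symm = Matrix.fromBlocks
      (Matrix.of fun i j : Fin A.card =>
        Y (A.orderEmbOfFin rfl i) (B.orderEmbOfFin h.symm j)) 0 0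
      (Matrix.of fun i j : Fin Aᶜ.card =>
        Y (Aᶜ.orderEmbOfFin rfl i) (Bᶜ.orderEmbOfFin h'.symm j)) := by
    have a1 : ∀ i, A.orderEmbOfFin rfl i ∈ A := fun i => orderEmbOfFin_mem _ _ _
    have a2 : ∀ i, Aᶜ.orderEmbOfFin rfl i ∉ A := fun i => mem_compl.1 (orderEmbOfFin_mem _ _ _)
    have b1 : ∀ i, B.orderEmbOfFin h.symm i ∈ B := fun i => orderEmbOfFin_mem _ _ _
    have b2 : ∀ i, Bᶜ.orderEmbOfFin h'.symm i ∉ B :=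
      fun i => mem_compl.1 (orderEmbOfFin_mem _ _ _)
    ext i j
    rcases i with i | i <;> rcases j with j | j
    · simp [Z, eA, eB, a1, b1]
    · simp [Z, eA, eB, a1, b2]
    · simp [Z, eA, eB, a2, b1]
    · simp [Z, eA, eB, a2, b2]
  rw [hblk, Matrix.det_fromBlocks_zero₂₁, hZ] at hdet
  rw [minorM, minorM, dif_pos h, dif_pos h', hdet]
  rcases Int.units_eq_one_or (Equiv.Perm.sign (eB.symm.trans eA.symm.symm)) with hs | hs
  · left; rw [hs]; simp
  · right; rw [hs]; simp

lemma minorM_eq {m n : ℕ} {R : Type*} [CommRing R] (X : Matrix (Fin m) (Fin n) R)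
    {A : Finset (Fin m)} {B : Finset (Fin n)} {p : ℕ} (hA : A.card = p) (hB : B.card = p) :
    minorM X A B = (Matrix.of fun i j : Fin p =>
      X (A.orderEmbOfFin hA i) (B.orderEmbOfFin hB j)).det := by
  subst hA
  rw [minorM, dif_pos hB.symm]

lemma orderEmb_image {N m : ℕ} {ρ : Fin N → Fin m} (hρ : Monotone ρ) {A : Finset (Fin N)}
    (hi : Set.InjOn ρ A) {p : ℕ} (hA : A.card = p) (hA' : (A.image ρ).card = p) (i : Fin p) :
    (A.image ρ).orderEmbOfFin hA' i = ρ (A.orderEmbOfFin hA i) := by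
  have := orderEmbOfFin_unique hA' (f := fun i => ρ (A.orderEmbOfFin hA i))
    (fun x => mem_image_of_mem _ (orderEmbOfFin_mem _ _ _)) ?_
  · exact (congrFun this i).symm
  · intro a b hab
    refine lt_of_le_of_ne (hρ ((A.orderEmbOfFin hA).monotone hab.le)) fun h => ?_
    have := hi (orderEmbOfFin_mem _ _ _) (orderEmbOfFin_mem _ _ _) h
    exact hab.ne ((A.orderEmbOfFin hA).injective this)

lemma minor_submatrix_inj {N m n : ℕ} {R : Type*} [CommRing R] (X : Matrix (Fin m) (Fin n) R)
    {ρ : Fin N → Fin m} {κ : Fin N → Fin n} (hρ : Monotone ρ) (hκ : Monotone κ)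
    {A B : Finset (Fin N)} (hA : Set.InjOn ρ A) (hB : Set.InjOn κ B) :
    minorM (X.submatrix ρ κ) A B = minorM X (A.image ρ) (B.image κ) := by
  have hA' := card_image_of_injOn hA
  have hB' := card_image_of_injOn hB
  by_cases h : A.card = B.card
  · rw [minorM_eq (X.submatrix ρ κ) rfl h.symm, minorM_eq X hA' (hB'.trans h.symm)]
    congr 1
    ext i j
    simp [orderEmb_image hρ hA rfl, orderEmb_image hκ hB h.symm]
  · rw [minorM, dif_neg h, minorM, dif_neg (by rwa [hA', hB'])]

lemma exists_index {N : ℕ} {A : Finset (Fin N)} {p : ℕ} (hA : A.card = p) {a : Fin N}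
    (ha : a ∈ A) : ∃ i, A.orderEmbOfFin hA i = a := by
  have : a ∈ Set.range (A.orderEmbOfFin hA) := by rw [range_orderEmbOfFin]; exact ha
  exact this

lemma minor_submatrix_zero {N m n : ℕ} {R : Type*} [CommRing R] (X : Matrix (Fin m) (Fin n) R)
    {ρ : Fin N → Fin m} {κ : Fin N → Fin n}
    {A B : Finset (Fin N)} (h : ¬ (Set.InjOn ρ A ∧ Set.InjOn κ B)) :
    minorM (X.submatrix ρ κ) A B = 0 := by
  by_cases hc : A.card = B.card
  swap
  · rw [minorM, dif_neg hc]
  rw [minorM_eq (X.submatrix ρ κ) rfl hc.symm]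
  by_cases hA : Set.InjOn ρ A
  · have hB : ¬ Set.InjOn κ B := fun hB => h ⟨hA, hB⟩
    unfold Set.InjOn at hB
    push Not at hB
    obtain ⟨a, ha, b, hb, hab, hne⟩ := hB
    obtain ⟨i, rfl⟩ := exists_index hc.symm ha
    obtain ⟨j, rfl⟩ := exists_index hc.symm hb
    refine Matrix.det_zero_of_column_eq (i := i) (j := j) (fun e => hne (e ▸ rfl)) fun k => ?_
    simp [hab]
  · unfold Set.InjOn at hA
    push Not at hA
    obtain ⟨a, ha, b, hb, hab, hne⟩ := hA
    obtain ⟨i, rfl⟩ := exists_index rfl ha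
    obtain ⟨j, rfl⟩ := exists_index rfl hb
    refine Matrix.det_zero_of_row_eq (i := i) (j := j) (fun e => hne (e ▸ rfl)) ?_
    ext k
    simp [hab]

lemma cntB_toN {N : ℕ} (A : Finset (Fin N)) (k : ℕ) :
    cntB (toN A) k = (A.filter (fun i : Fin N => (i : ℕ) < k)).card := by
  unfold cntB toN
  rw [filter_map, card_map]
  rfl

/-- counting criterion for `domLE` -/
lemma domLE_of_count {α : Type*} [LinearOrder α] {S T : Finset α}
    (h : ∀ a, (T.filter (· ≤ a)).card ≤ (S.filter (· ≤ a)).card) : domLE S T := by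
  constructor
  · rcases T.eq_empty_or_nonempty with rfl | hT
    · simp
    · have := h (T.max' hT)
      rw [filter_true_of_mem (fun x hx => le_max' _ _ hx)] at this
      exact this.trans (card_filter_le _ _)
  · intro ν hT hS
    by_contra hlt
    push Not at hlt
    rw [length_sort] at hT hS
    have eT : (T.sort (· ≤ ·))[ν]'(by rwa [length_sort]) = T.orderEmbOfFin rfl ⟨ν, hT⟩ := rfl
    have eS : (S.sort (· ≤ ·))[ν]'(by rwa [length_sort]) = S.orderEmbOfFin rfl ⟨ν, hS⟩ := rfl
    rw [eT, eS] at hlt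
    have h0 := h (T.orderEmbOfFin rfl ⟨ν, hT⟩)
    have h1 : ((univ.filter (fun i : Fin T.card => i ≤ ⟨ν, hT⟩)).map
        (T.orderEmbOfFin rfl).toEmbedding) ⊆ T.filter (· ≤ T.orderEmbOfFin rfl ⟨ν, hT⟩) := by
      intro x hx
      obtain ⟨i, hi, rfl⟩ := mem_map.1 hx
      simp only [mem_filter, mem_univ, true_and] at hi ⊢
      exact ⟨orderEmbOfFin_mem _ _ _, (T.orderEmbOfFin rfl).monotone hi⟩
    have h2 : S.filter (· ≤ T.orderEmbOfFin rfl ⟨ν, hT⟩) ⊆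
        ((univ.filter (fun i : Fin S.card => i < ⟨ν, hS⟩)).map
        (S.orderEmbOfFin rfl).toEmbedding) := by
      intro x hx
      obtain ⟨hxS, hx⟩ := mem_filter.1 hx
      have : x ∈ Set.range (S.orderEmbOfFin rfl) := by rw [range_orderEmbOfFin]; exact hxS
      obtain ⟨i, rfl⟩ := this
      refine mem_map_of_mem _ ?_
      simp only [mem_filter, mem_univ, true_and]
      exact (S.orderEmbOfFin rfl).lt_iff_lt.1 (lt_of_le_of_lt hx hlt)
    have c1 := card_le_card h1
    have c2 := card_le_card h2
    rw [card_map] at c1 c2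
    have d1 : (univ.filter (fun i : Fin T.card => i ≤ ⟨ν, hT⟩)).card = ν + 1 := by
      have := Fin.card_Iic (⟨ν, hT⟩ : Fin T.card)
      rw [← this]; congr 1; ext; simp
    have d2 : (univ.filter (fun i : Fin S.card => i < ⟨ν, hS⟩)).card = ν := by
      have := Fin.card_Iio (⟨ν, hS⟩ : Fin S.card)
      refine Eq.trans ?_ this
      congr 1; ext; simp
    omega

lemma lower_eq {N m : ℕ} {ρ : Fin N → Fin m} (hρ : Monotone ρ) (x : Fin m) :
    ∃ k : ℕ, ∀ i : Fin N, ρ i ≤ x ↔ (i : ℕ) < k := by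
  by_cases h : ∃ k : ℕ, ∃ hk : k < N, ¬ ρ ⟨k, hk⟩ ≤ x
  · obtain ⟨k, ⟨hk, hk'⟩, hmin⟩ : ∃ k : ℕ, (∃ hk : k < N, ¬ ρ ⟨k, hk⟩ ≤ x) ∧
        ∀ l < k, ¬ ∃ hk : l < N, ¬ ρ ⟨l, hk⟩ ≤ x := by
      classical
      exact ⟨Nat.find h, Nat.find_spec h, fun l hl => Nat.find_min h hl⟩
    refine ⟨k, fun i => ⟨fun hi => ?_, fun hi => ?_⟩⟩
    · by_contra hc
      push Not at hc
      exact hk' (le_trans (hρ (show (⟨k, hk⟩ : Fin N) ≤ i from Fin.le_def.2 hc)) hi)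
    · by_contra hc
      exact hmin i hi ⟨i.2, hc⟩
  · push Not at h
    exact ⟨N, fun i => ⟨fun _ => i.2, fun _ => h i i.2⟩⟩

lemma domLE_image {N m : ℕ} {ρ : Fin N → Fin m} (hρ : Monotone ρ) {A B : Finset (Fin N)}
    (hA : Set.InjOn ρ A) (h : bLE (toN A) (toN B)) : domLE (A.image ρ) (B.image ρ) := by
  refine domLE_of_count fun x => ?_
  obtain ⟨k, hk⟩ := lower_eq hρ x
  have := h k
  rw [cntB_toN, cntB_toN] at this
  rw [filter_image, filter_image]
  simp only [hk]
  refine card_image_le.trans (this.trans ?_)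
  rw [card_image_of_injOn]
  exact hA.mono (coe_subset.2 (filter_subset _ _))

lemma bLE_compl {N : ℕ} {A : Finset (Fin N)} (h : ballot N (toN A)) :
    bLE (toN A) (toN Aᶜ) := by
  have key : ∀ k ≤ N, cntB (toN Aᶜ) k ≤ cntB (toN A) k := by
    intro k hk
    have h1 := h k hk
    rw [cntB_toN] at h1 ⊢
    rw [cntB_toN]
    have h2 : (Aᶜ.filter (fun i : Fin N => (i : ℕ) < k)).card + (A.filter (fun i : Fin N => (i : ℕ) < k)).card
        ≤ k := by
      rw [← card_union_of_disjoint]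
      · rw [← filter_union]
        have : ((Aᶜ ∪ A).filter (fun i : Fin N => (i : ℕ) < k)).map Fin.valEmbedding ⊆ range k := by
          intro x hx
          obtain ⟨y, hy, rfl⟩ := mem_map.1 hx
          exact mem_range.2 (mem_filter.1 hy).2
        have := card_le_card this
        rwa [card_map, card_range] at this
      · exact disjoint_filter_filter disjoint_compl_left
    omega
  intro k
  rcases Nat.lt_or_ge N k with hk | hk
  · have := key N le_rfl
    rwa [cntB_card (toN_range _) le_rfl, cntB_card (toN_range _) le_rfl,
      ← cntB_card (toN_range _) hk.le, ← cntB_card (toN_range A) hk.le] at this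
  · exact key k hk

/-- merging two subsets into one weakly increasing sequence -/
lemma merge_exists {m N : ℕ} (S' S'' : Finset (Fin m)) (hN : S'.card + S''.card = N) :
    ∃ (ρ : Fin N → Fin m) (A0 : Finset (Fin N)), Monotone ρ ∧ Set.InjOn ρ A0 ∧
      Set.InjOn ρ (A0ᶜ : Finset (Fin N)) ∧ A0.image ρ = S' ∧ A0ᶜ.image ρ = S'' ∧
      ∀ A : Finset (Fin N), Set.InjOn ρ A → bLE (toN A) (toN A0) → A.image ρ = S' → A = A0 := by
  classical
  let P : Finset (Fin m ×ₗ Bool) := S'.image (fun x => toLex (x, false)) ∪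
    S''.image (fun x => toLex (x, true))
  have hP : P.card = N := by
    rw [card_union_of_disjoint, card_image_of_injective, card_image_of_injective, hN]
    · intro a b hab; simpa using hab
    · intro a b hab; simpa using hab
    · rw [disjoint_left]
      intro x hx hx'
      obtain ⟨a, _, rfl⟩ := mem_image.1 hx
      obtain ⟨b, _, hb⟩ := mem_image.1 hx'
      simp at hb
  let em := P.orderEmbOfFin hP
  let ρ : Fin N → Fin m := fun i => (ofLex (em i)).1
  let lb : Fin N → Bool := fun i => (ofLex (em i)).2
  have hem : ∀ i, em i = toLex (ρ i, lb i) := fun i => rfl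
  have hle : ∀ i j, i ≤ j ↔ ρ i < ρ j ∨ ρ i = ρ j ∧ lb i ≤ lb j := by
    intro i j
    rw [← em.le_iff_le, Prod.Lex.le_iff]
  have hinj : ∀ i j, ρ i = ρ j → lb i = lb j → i = j := by
    intro i j h1 h2
    apply em.injective
    rw [hem, hem, h1, h2]
  have hmem : ∀ i, em i ∈ P := fun i => orderEmbOfFin_mem _ _ _
  have hmemF : ∀ i, lb i = false → ρ i ∈ S' := by
    intro i hi
    have := hmem i
    rw [hem, hi] at this
    simpa [P] using this
  have hmemT : ∀ i, lb i = true → ρ i ∈ S'' := by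
    intro i hi
    have := hmem i
    rw [hem, hi] at this
    simpa [P] using this
  have hsurj : ∀ y ∈ P, ∃ i, em i = y := by
    intro y hy
    have : y ∈ Set.range (P.orderEmbOfFin hP) := by rw [range_orderEmbOfFin]; exact hy
    exact this
  have hsF : ∀ x ∈ S', ∃ i, ρ i = x ∧ lb i = false := by
    intro x hx
    obtain ⟨i, hi⟩ := hsurj (toLex (x, false)) (by simp [P, hx])
    exact ⟨i, by simp [ρ, hi], by simp [lb, hi]⟩
  have hsT : ∀ x ∈ S'', ∃ i, ρ i = x ∧ lb i = true := by
    intro x hx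
    obtain ⟨i, hi⟩ := hsurj (toLex (x, true)) (by simp [P, hx])
    exact ⟨i, by simp [ρ, hi], by simp [lb, hi]⟩
  have hmono : Monotone ρ := by
    intro i j hij
    rcases (hle i j).1 hij with h | h
    · exact h.le
    · exact h.1.le
  refine ⟨ρ, univ.filter (fun i => lb i = false), hmono, ?_, ?_, ?_, ?_, ?_⟩
  · intro i hi j hj hij
    simp at hi hj
    exact hinj i j hij (hi.trans hj.symm)
  · intro i hi j hj hij
    simp at hi hj
    exact hinj i j hij (hi.trans hj.symm)
  · ext x
    simp only [mem_image, mem_filter, mem_univ, true_and]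
    constructor
    · rintro ⟨i, hi, rfl⟩; exact hmemF i hi
    · intro hx
      obtain ⟨i, h1, h2⟩ := hsF x hx
      exact ⟨i, h2, h1⟩
  · ext x
    simp only [mem_image, mem_compl, mem_filter, mem_univ, true_and, Bool.not_eq_false]
    constructor
    · rintro ⟨i, hi, rfl⟩; exact hmemT i hi
    · intro hx
      obtain ⟨i, h1, h2⟩ := hsT x hx
      exact ⟨i, h2, h1⟩
  · intro A hA hb hAS
    have hsub : A ⊆ univ.filter (fun i => lb i = false) := by
      intro a ha
      by_contra hna
      have hla : lb a = true := by simpa using hna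
      have hx : ρ a ∈ S' := by rw [← hAS]; exact mem_image_of_mem _ ha
      obtain ⟨a0, h1, h2⟩ := hsF _ hx
      have hlt : a0 < a := by
        refine lt_of_le_of_ne ((hle a0 a).2 (Or.inr ⟨h1, by rw [h2]; exact Bool.false_le _⟩)) ?_
        rintro rfl
        rw [hla] at h2; exact absurd h2 (by simp)
      have hc := hb ((a0 : ℕ) + 1)
      rw [cntB_toN, cntB_toN] at hc
      have c1 : (A.filter (fun i : Fin N => (i : ℕ) < (a0 : ℕ) + 1)).card <
          (S'.filter (· ≤ ρ a)).card := by
        rw [← card_image_of_injOn (f := ρ) (hA.mono (coe_subset.2 (filter_subset _ _)))]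
        apply card_lt_card
        rw [ssubset_iff_of_subset]
        · refine ⟨ρ a, by simp [hx], ?_⟩
          intro hmem
          obtain ⟨b, hb1, hb2⟩ := mem_image.1 hmem
          obtain ⟨hbA, hb3⟩ := mem_filter.1 hb1
          have := hA hbA ha hb2
          subst this
          have : (a0 : ℕ) < b := hlt
          omega
        · intro y hy
          obtain ⟨b, hb1, rfl⟩ := mem_image.1 hy
          obtain ⟨hbA, hb3⟩ := mem_filter.1 hb1
          refine mem_filter.2 ⟨by rw [← hAS]; exact mem_image_of_mem _ hbA, ?_⟩
          rw [← h1]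
          exact hmono (Fin.le_def.2 (by omega))
      have c2 : (S'.filter (· ≤ ρ a)).card ≤
          ((univ.filter (fun i => lb i = false)).filter (fun i : Fin N => (i : ℕ) < (a0 : ℕ) + 1)).card := by
        refine le_trans (card_le_card ?_) (card_image_le (f := ρ))
        intro y hy
        obtain ⟨hyS, hy⟩ := mem_filter.1 hy
        obtain ⟨i, rfl, hi⟩ := hsF y hyS
        refine mem_image_of_mem _ (mem_filter.2 ⟨by simp [hi], ?_⟩)
        have : i ≤ a0 := by
          rw [hle, h1, hi, h2]
          rcases hy.lt_or_eq with h | h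
          · exact Or.inl h
          · exact Or.inr ⟨h, le_rfl⟩
        have : (i : ℕ) ≤ a0 := this
        omega
      omega
    refine eq_of_subset_of_card_le hsub ?_
    rw [← card_image_of_injOn hA, hAS]
    refine card_le_card_of_injOn ρ (fun i hi => hmemF i (by simpa using hi)) ?_
    intro i hi j hj hij
    simp at hi hj
    exact hinj i j hij (hi.trans hj.symm)

lemma straighten_ring {m n : ℕ} (S' S'' : Finset (Fin m)) (T' T'' : Finset (Fin n))
    (h : ¬(domLE S' S'' ∧ domLE T' T'')) {R : Type*} [CommRing R]
    (X : Matrix (Fin m) (Fin n) R) :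
    minorM X S' T' * minorM X S'' T'' ∈ Submodule.span ℤ {x : R |
      ∃ (S₁ S₂ : Finset (Fin m)) (T₁ T₂ : Finset (Fin n)),
      (domLE S₁ S' ∧ domLE T₁ T' ∧ (S₁, T₁) ≠ (S', T')) ∧
      (domLE S₁ S₂ ∧ domLE T₁ T₂) ∧ x = minorM X S₁ T₁ * minorM X S₂ T₂} := by
  by_cases h1 : S'.card = T'.card
  swap
  · rw [minorM, dif_neg h1, zero_mul]; exact Submodule.zero_mem _
  by_cases h2 : S''.card = T''.card
  swap
  · rw [minorM.eq_1 X S'', dif_neg h2, mul_zero]; exact Submodule.zero_mem _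
  obtain ⟨N, hN⟩ : ∃ N, S'.card + S''.card = N := ⟨_, rfl⟩
  obtain ⟨ρ, A0, ρm, ρi, ρi', ρS', ρS'', ρu⟩ := merge_exists S' S'' hN
  obtain ⟨κ, B0, κm, κi, κi', κT', κT'', κu⟩ := merge_exists (N := N) T' T''
    (by rw [← h1, ← h2, hN])
  have e : minorM X S' T' * minorM X S'' T'' =
      minorM (X.submatrix ρ κ) A0 B0 * minorM (X.submatrix ρ κ) A0ᶜ B0ᶜ := by
    rw [minor_submatrix_inj X ρm κm ρi κi, minor_submatrix_inj X ρm κm ρi' κi',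
      ρS', ρS'', κT', κT'']
  have key : LL (X.submatrix ρ κ) A0 B0 ∈ Submodule.span ℤ {x : R |
      ∃ (S₁ S₂ : Finset (Fin m)) (T₁ T₂ : Finset (Fin n)),
      (domLE S₁ S' ∧ domLE T₁ T' ∧ (S₁, T₁) ≠ (S', T')) ∧
      (domLE S₁ S₂ ∧ domLE T₁ T₂) ∧ x = minorM X S₁ T₁ * minorM X S₂ T₂} := by
    refine Submodule.span_le.2 ?_ (LL_straighten (X.submatrix ρ κ) A0 B0)
    rintro x ⟨A, B, hA, hB, hAA, hBB, rfl⟩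
    suffices hs : minorM (X.submatrix ρ κ) A B * minorM (X.submatrix ρ κ) Aᶜ Bᶜ ∈
        Submodule.span ℤ {x : R |
      ∃ (S₁ S₂ : Finset (Fin m)) (T₁ T₂ : Finset (Fin n)),
      (domLE S₁ S' ∧ domLE T₁ T' ∧ (S₁, T₁) ≠ (S', T')) ∧
      (domLE S₁ S₂ ∧ domLE T₁ T₂) ∧ x = minorM X S₁ T₁ * minorM X S₂ T₂} by
      rcases minor_LL (X.submatrix ρ κ) A B with hh | hh
      · rwa [hh] at hs
      · rw [hh] at hs
        simpa using Submodule.neg_mem _ hs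
    by_cases i1 : Set.InjOn ρ A ∧ Set.InjOn κ B
    swap
    · rw [minor_submatrix_zero X i1, zero_mul]; exact Submodule.zero_mem _
    by_cases i2 : Set.InjOn ρ (Aᶜ : Finset _) ∧ Set.InjOn κ (Bᶜ : Finset _)
    swap
    · rw [minor_submatrix_zero X i2, mul_zero]; exact Submodule.zero_mem _
    rw [minor_submatrix_inj X ρm κm i1.1 i1.2, minor_submatrix_inj X ρm κm i2.1 i2.2]
    have d1 := domLE_image ρm i1.1 (bLE_compl hA)
    have d2 := domLE_image κm i1.2 (bLE_compl hB)
    refine Submodule.subset_span ⟨_, _, _, _, ⟨?_, ?_, ?_⟩, ⟨d1, d2⟩, rfl⟩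
    · rw [← ρS']; exact domLE_image ρm i1.1 hAA
    · rw [← κT']; exact domLE_image κm i1.2 hBB
    · intro heq
      obtain ⟨q1, q2⟩ := Prod.mk.inj heq
      have r1 := ρu A i1.1 hAA q1
      have r2 := κu B i1.2 hBB q2
      subst r1 r2
      rw [ρS', ρS''] at d1
      rw [κT', κT''] at d2
      exact h ⟨d1, d2⟩
  rw [e]
  rcases minor_LL (X.submatrix ρ κ) A0 B0 with hh | hh
  · rwa [hh]
  · rw [hh]; exact Submodule.neg_mem _ key

lemma minorM_map {m n : ℕ} {R S : Type*} [CommRing R] [CommRing S] (f : R →+* S)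
    (X : Matrix (Fin m) (Fin n) R) (A : Finset (Fin m)) (B : Finset (Fin n)) :
    f (minorM X A B) = minorM (X.map f) A B := by
  unfold minorM
  split_ifs
  · rw [RingHom.map_det]; rfl
  · exact map_zero f

lemma exists_signed_list {M : Type*} [AddCommGroup M] {s : Set M} {x : M}
    (hx : x ∈ Submodule.span ℤ s) :
    ∃ l : List (ℤ × M), (∀ p ∈ l, (p.1 = 1 ∨ p.1 = -1) ∧ p.2 ∈ s) ∧
      x = (l.map (fun p => p.1 • p.2)).sum := by
  rw [← Submodule.mem_toAddSubgroup, Submodule.span_int_eq_addSubgroupClosure] at hx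
  induction hx using AddSubgroup.closure_induction with
  | mem x hx => exact ⟨[(1, x)], by simp [hx], by simp⟩
  | zero => exact ⟨[], by simp, by simp⟩
  | add x y _ _ hx hy =>
    obtain ⟨l, h1, rfl⟩ := hx
    obtain ⟨l', h1', rfl⟩ := hy
    refine ⟨l ++ l', ?_, by simp⟩
    intro p hp
    rcases List.mem_append.1 hp with hp | hp
    · exact h1 p hp
    · exact h1' p hp
  | neg x hx0 hx =>
    clear hx0
    obtain ⟨l, h1, rfl⟩ := hx
    refine ⟨l.map (fun p => (-p.1, p.2)), ?_, ?_⟩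
    · intro p hp
      obtain ⟨q, hq, rfl⟩ := List.mem_map.1 hp
      refine ⟨?_, (h1 q hq).2⟩
      rcases (h1 q hq).1 with h | h
      · right; simp [h]
      · left; simp [h]
    · clear h1
      induction l with
      | nil => simp
      | cons a l ih => simp at ih ⊢; rw [← ih]; abel

/-- Theorem 3 (straightening law for minors): if `(S′,T′) ≰ (S″,T″)` then
`(S′|T′)(S″|T″) = Σᵢ ±(S′ᵢ|T′ᵢ)(S″ᵢ|T″ᵢ)` with `(S′ᵢ,T′ᵢ) < (S′,T′)` and
`(S′ᵢ,T′ᵢ) ≤ (S″ᵢ,T″ᵢ)`; the same signed combination works for every `m×n` matrix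
over every commutative ring. -/
theorem statement12 {m n : ℕ} (S' S'' : Finset (Fin m)) (T' T'' : Finset (Fin n))
    (h : ¬(domLE S' S'' ∧ domLE T' T'')) :
    ∃ (k : ℕ) (S₁ S₂ : Fin k → Finset (Fin m)) (T₁ T₂ : Fin k → Finset (Fin n))
      (ε : Fin k → ℤ),
      (∀ i, ε i = 1 ∨ ε i = -1) ∧
      (∀ i, domLE (S₁ i) S' ∧ domLE (T₁ i) T' ∧ (S₁ i, T₁ i) ≠ (S', T')) ∧
      (∀ i, domLE (S₁ i) (S₂ i) ∧ domLE (T₁ i) (T₂ i)) ∧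
      ∀ (R : Type*) [CommRing R] (X : Matrix (Fin m) (Fin n) R),
        minorM X S' T' * minorM X S'' T'' =
          ∑ i, (ε i : R) * (minorM X (S₁ i) (T₁ i) * minorM X (S₂ i) (T₂ i)) := by
  have hmem := straighten_ring S' S'' T' T'' h (genX m n ℤ)
  obtain ⟨l, hl, hsum⟩ := exists_signed_list hmem
  have hl' : ∀ i : Fin l.length, (l.get i).1 = 1 ∨ (l.get i).1 = -1 :=
    fun i => (hl _ (List.get_mem l i)).1
  have hl'' := fun i : Fin l.length => (hl _ (List.get_mem l i)).2
  choose S₁ S₂ T₁ T₂ p1 p2 p3 using hl''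
  refine ⟨l.length, S₁, S₂, T₁, T₂, fun i => (l.get i).1, hl', p1, p2, ?_⟩
  intro R _ X
  let f : MvPolynomial (Fin m × Fin n) ℤ →+* R :=
    MvPolynomial.eval₂Hom (Int.castRingHom R) (fun ij => X ij.1 ij.2)
  have hf : (genX m n ℤ).map f = X := by
    ext i j
    simp [genX, f]
  have hs : (l.map (fun p => p.1 • p.2)).sum =
      ∑ i : Fin l.length, (l.get i).1 • (l.get i).2 := by
    rw [← List.sum_ofFn]
    congr 1
    apply List.ext_get
    · simp
    · intro k h1 h2; simp
  rw [hs] at hsum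
  have := congrArg f hsum
  rw [map_mul, minorM_map, minorM_map, hf, map_sum] at this
  rw [this]
  refine sum_congr rfl fun i _ => ?_
  rw [map_zsmul, p3 i, map_mul, minorM_map, minorM_map, hf, zsmul_eq_mul]
end

section
/- Let R be a commutative ring and let X be the generic m×n matrix whose entries are the indeterminates x_{ij} of the polynomial ring R[x_{ij} : 1 ≤ i ≤ m, 1 ≤ j ≤ n]. Then every element of R[x_{ij}] is an R-linear combination of standard monomials in the minors of X, i.e., of products X(A₁|B₁)⋯X(A_r|B_r) with A₁ ≤ ⋯ ≤ A_r and B₁ ≤ ⋯ ≤ B_r (the empty product, r = 0, being allowed). -/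
open Finset

section Straighten

variable {m : ℕ} {S : Type*} [CommRing S]

/-- The maximal minor of the matrix with columns `Y 0, Y 1, …` on the columns `t`. -/
def ddet (Y : ℕ → Fin m → S) (t : Fin m → ℕ) : S :=
  Matrix.detRowAlternating (R := S) (fun i => Y (t i))

/-- The determinant as an alternating function of the rows satisfying `P`. -/
def detRestr (P : Fin m → Prop) [DecidablePred P] (z : Fin m → (Fin m → S)) :
    (Fin m → S) [⋀^{i // P i}]→ₗ[S] S :=
  { (Matrix.detRowAlternating (R := S) (n := Fin m)).toMultilinearMap.domDomRestrict P
      (fun i => z i) with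
    map_eq_zero_of_eq' := by
      intro v i j hv hij
      refine (Matrix.detRowAlternating (R := S) (n := Fin m)).map_eq_zero_of_eq
        _ (i := i.1) (j := j.1) ?_ (fun h => hij (Subtype.ext h))
      simp [i.2, j.2, hv] }

theorem detRestr_apply (P : Fin m → Prop) [DecidablePred P] (z : Fin m → (Fin m → S))
    (v : {i // P i} → (Fin m → S)) :
    detRestr P z v = Matrix.detRowAlternating (R := S)
      (fun j => if h : P j then v ⟨j, h⟩ else z j) := rfl

theorem alt_zero {ι N : Type*} [Fintype ι] [AddCommGroup N] [Module S N]
    (h : m < Fintype.card ι) (f : (Fin m → S) [⋀^ι]→ₗ[S] N) : f = 0 := by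
  refine Module.Basis.ext_alternating (Pi.basisFun S (Fin m)) ?_
  intro v hv
  have := Fintype.card_le_of_injective v hv
  simp at this
  omega

/-- Combination of `v` on `P` and `a` elsewhere. -/
def comb (P : Fin m → Prop) [DecidablePred P] (a : Fin m → ℕ) (v : {i // P i} → ℕ) :
    Fin m → ℕ := fun j => if h : P j then v ⟨j, h⟩ else a j

theorem detRestr_comb (Y : ℕ → Fin m → S) (P : Fin m → Prop) [DecidablePred P] (a : Fin m → ℕ)
    (v : {i // P i} → ℕ) :
    detRestr P (fun i => Y (a i)) (fun i => Y (v i)) = ddet Y (comb P a v) := by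
  rw [detRestr_apply, ddet]
  congr 1
  ext j
  unfold comb
  split_ifs <;> rfl

theorem comb_self (P : Fin m → Prop) [DecidablePred P] (a : Fin m → ℕ) :
    comb P a (fun i => a i) = a := by
  ext j; simp [comb]

theorem sum_comb (P : Fin m → Prop) [DecidablePred P] (a : Fin m → ℕ) (v : {i // P i} → ℕ) :
    ∑ j, comb P a v j = ∑ i, v i + ∑ i : {i // ¬ P i}, a i := by
  rw [← Fintype.sum_subtype_add_sum_subtype P]
  congr 1
  · exact Fintype.sum_congr _ _ fun i => by simp [comb, i.2]
  · exact Fintype.sum_congr _ _ fun i => by simp [comb, i.2]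

theorem shuffle_lt {α β : Type*} [Fintype α] [Fintype β] [DecidableEq α] [DecidableEq β]
    (c : α ⊕ β → ℕ)
    (hc : ∀ x y, c (Sum.inr y) < c (Sum.inl x)) (σ : Equiv.Perm (α ⊕ β))
    (hσ : (Quotient.mk'' σ : Equiv.Perm.ModSumCongr α β) ≠ Quotient.mk'' 1) :
    ∑ i, c (σ (Sum.inl i)) < ∑ i, c (Sum.inl i) := by
  -- some left element goes right
  have hex : ∃ i j, σ (Sum.inl i) = Sum.inr j := by
    by_contra hno
    push Not at hno
    apply hσ
    symm
    rw [Quotient.eq'', QuotientGroup.leftRel_apply]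
    simp only [inv_one, one_mul]
    apply Equiv.Perm.mem_sumCongrHom_range_of_perm_mapsTo_inl
    rintro _ ⟨i, rfl⟩
    rcases h : σ (Sum.inl i) with x | y
    · exact ⟨x, rfl⟩
    · exact absurd h (hno i y)
  obtain ⟨i0, j0, h0⟩ := hex
  set L : Finset (α ⊕ β) := Finset.univ.map ⟨Sum.inl, Sum.inl_injective⟩ with hL
  set LL : Finset (α ⊕ β) := L.map σ.toEmbedding with hLL
  have e1 : ∑ i, c (Sum.inl i) = ∑ x ∈ L, c x := by simp [hL]
  have e2 : ∑ i, c (σ (Sum.inl i)) = ∑ x ∈ LL, c x := by simp [hLL, hL]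
  have hcard : LL.card = L.card := by simp [hLL]
  have hcard2 : (LL \ L).card = (L \ LL).card := Finset.card_sdiff_comm hcard
  have hne : (LL \ L).Nonempty := ⟨Sum.inr j0, by
    simp only [Finset.mem_sdiff]
    constructor
    · rw [← h0]; simp [hLL, hL]
    · simp [hL]⟩
  rw [e1, e2, ← Finset.sum_sdiff_lt_sum_sdiff]
  obtain ⟨e⟩ : Nonempty ((LL \ L : Finset _) ≃ (L \ LL : Finset _)) :=
    ⟨Finset.equivOfCardEq hcard2⟩
  rw [← Finset.sum_coe_sort (LL \ L), ← Finset.sum_coe_sort (L \ LL), ← e.sum_comp]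
  have key : ∀ (x : (LL \ L : Finset _)) (y : (L \ LL : Finset _)), c x < c y := by
    rintro ⟨x, hx⟩ ⟨y, hy⟩
    rcases x with x | x
    · simp [hL] at hx
    · rcases y with y | y
      · exact hc _ _
      · simp [hL] at hy
  refine Finset.sum_lt_sum (fun x _ => (key _ _).le) ?_
  obtain ⟨x, hx⟩ := hne
  exact ⟨⟨x, hx⟩, Finset.mem_univ _, key _ _⟩

theorem exchange (Y : ℕ → Fin m → S) (a b : Fin m → ℕ) (ha : StrictMono a) (hb : StrictMono b)
    (k : Fin m) (hk : b k < a k) :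
    ddet Y a * ddet Y b ∈ AddSubgroup.closure
      {x | ∃ a' b' : Fin m → ℕ, ∑ i, a' i < ∑ i, a i ∧ x = ddet Y a' * ddet Y b'} := by
  classical
  set f := detRestr (fun i => k ≤ i) (fun i => Y (a i)) with hf
  set g := detRestr (fun i => i ≤ k) (fun i => Y (b i)) with hg
  let c : {i // k ≤ i} ⊕ {i // i ≤ k} → ℕ := Sum.elim (fun i => a i) (fun i => b i)
  have hz : AlternatingMap.domCoprod f g (fun i => Y (c i)) = 0 := by
    rw [alt_zero (m := m) _ (AlternatingMap.domCoprod f g)]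
    · rfl
    · rw [Fintype.card_sum, Fintype.card_subtype, Fintype.card_subtype]
      have h1 : (Finset.univ.filter fun i : Fin m => k ≤ i) = Finset.Ici k := by ext; simp
      have h2 : (Finset.univ.filter fun i : Fin m => i ≤ k) = Finset.Iic k := by ext; simp
      rw [h1, h2, Fin.card_Ici, Fin.card_Iic]
      omega
  have hz2 := congrArg (LinearMap.mul' S S) hz
  rw [AlternatingMap.domCoprod_apply, _root_.sum_apply, map_sum, map_zero] at hz2
  have hterm : ∀ σ : Equiv.Perm ({i // k ≤ i} ⊕ {i // i ≤ k}),
      LinearMap.mul' S S (AlternatingMap.domCoprod.summand f g (Quotient.mk'' σ)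
        (fun i => Y (c i))) = Equiv.Perm.sign σ •
        (ddet Y (comb _ a fun i => c (σ (Sum.inl i))) *
          ddet Y (comb _ b fun i => c (σ (Sum.inr i)))) := by
    intro σ
    rw [AlternatingMap.domCoprod.summand_mk'', ← detRestr_comb, ← detRestr_comb]
    rcases Int.units_eq_one_or (Equiv.Perm.sign σ) with h | h <;> rw [h] <;> simp [hf, hg]
  let q1 : Equiv.Perm.ModSumCongr {i // k ≤ i} {i // i ≤ k} := Quotient.mk'' 1
  replace hz2 := (Finset.add_sum_erase _ _ (a := q1) (Finset.mem_univ _)).trans hz2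
  rw [hterm 1] at hz2
  have e1 : (comb (fun i => k ≤ i) a fun i => c ((1 : Equiv.Perm ({i // k ≤ i} ⊕ {i // i ≤ k})) (Sum.inl i))) = a :=
    comb_self _ a
  have e2 : (comb (fun i => i ≤ k) b fun i => c ((1 : Equiv.Perm ({i // k ≤ i} ⊕ {i // i ≤ k})) (Sum.inr i))) = b :=
    comb_self _ b
  rw [e1, e2, Equiv.Perm.sign_one, one_smul] at hz2
  rw [eq_neg_of_add_eq_zero_left hz2]
  refine neg_mem (sum_mem ?_)
  intro q hq
  induction q using Quotient.inductionOn' with | _ σ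
  have hne := (Finset.mem_erase.mp hq).1
  rw [hterm σ]
  have hlt := shuffle_lt c (by
    rintro ⟨x, hx⟩ ⟨y, hy⟩
    exact lt_of_le_of_lt (hb.monotone hy) (lt_of_lt_of_le hk (ha.monotone hx))) σ hne
  have hmem : (ddet Y (comb _ a fun i => c (σ (Sum.inl i))) *
          ddet Y (comb _ b fun i => c (σ (Sum.inr i)))) ∈ AddSubgroup.closure
      {x | ∃ a' b' : Fin m → ℕ, ∑ i, a' i < ∑ i, a i ∧ x = ddet Y a' * ddet Y b'} := by
    apply AddSubgroup.subset_closure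
    refine ⟨_, _, ?_, rfl⟩
    rw [sum_comb]
    conv_rhs => rw [← comb_self (fun i => k ≤ i) a, sum_comb]
    exact Nat.add_lt_add_right hlt _
  rcases Int.units_eq_one_or (Equiv.Perm.sign σ) with h | h <;> rw [h]
  · simpa using hmem
  · simpa using neg_mem hmem

theorem ddet_perm (Y : ℕ → Fin m → S) (t : Fin m → ℕ) (σ : Equiv.Perm (Fin m)) :
    ddet Y (t ∘ σ) = Equiv.Perm.sign σ • ddet Y t :=
  AlternatingMap.map_perm (Matrix.detRowAlternating (R := S)) (fun i => Y (t i)) σ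

theorem mem_of_signs {ι : Type*} (s : Finset ι) (P : AddSubgroup S) (F G : ι → S)
    (h : ∀ i, F i = G i ∨ F i = - G i) (hG : ∏ i ∈ s, G i ∈ P) : ∏ i ∈ s, F i ∈ P := by
  classical
  have : ∏ i ∈ s, F i = ∏ i ∈ s, G i ∨ ∏ i ∈ s, F i = - ∏ i ∈ s, G i := by
    clear hG
    induction s using Finset.induction_on with
    | empty => simp
    | insert a s ha ih =>
      rw [Finset.prod_insert ha, Finset.prod_insert ha]
      rcases h a with h | h <;> rcases ih with ih | ih <;> rw [h, ih] <;> simp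
  rcases this with h | h <;> rw [h]
  · exact hG
  · exact neg_mem hG

theorem straighten (Y : ℕ → Fin m → S) (P : AddSubgroup S) (r : ℕ)
    (hstd : ∀ t : Fin r → Fin m → ℕ, (∀ i, StrictMono (t i)) →
      (∀ i j, i ≤ j → ∀ k, t i k ≤ t j k) → ∏ i, ddet Y (t i) ∈ P)
    (t : Fin r → Fin m → ℕ) : ∏ i, ddet Y (t i) ∈ P := by
  classical
  induction hM : (toLex fun i => ∑ k, t i k : Lex (Fin r → ℕ)) using
    WellFoundedLT.induction generalizing t with
  | _ M ih =>
  subst hM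
  by_cases hinj : ∀ i, Function.Injective (t i)
  · let ts : Fin r → Fin m → ℕ := fun i => t i ∘ Tuple.sort (t i)
    have hts : ∀ i, StrictMono (ts i) := fun i =>
      (Tuple.monotone_sort (t i)).strictMono_of_injective
        ((hinj i).comp (Tuple.sort (t i)).injective)
    have hsum : ∀ i, ∑ k, ts i k = ∑ k, t i k := fun i =>
      Equiv.sum_comp (Tuple.sort (t i)) (t i)
    refine mem_of_signs Finset.univ P _ (fun i => ddet Y (ts i)) ?_ ?_
    · intro i
      simp only [ts, ddet_perm]
      rcases Int.units_eq_one_or (Equiv.Perm.sign (Tuple.sort (t i))) with h | h <;> rw [h] <;> simp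
    by_cases hs : ∀ i j, i ≤ j → ∀ k, ts i k ≤ ts j k
    · exact hstd ts hts hs
    push Not at hs
    obtain ⟨i, j, hij, k, hk⟩ := hs
    have hne : i ≠ j := by rintro rfl; exact lt_irrefl _ hk
    have hlt : i < j := lt_of_le_of_ne hij hne
    have hex := exchange Y (ts i) (ts j) (hts i) (hts j) k hk
    have hsplit : ∀ u : Fin r → Fin m → ℕ, ∏ l, ddet Y (u l) =
        (ddet Y (u i) * ddet Y (u j)) * ∏ l ∈ (Finset.univ.erase i).erase j, ddet Y (u l) := by
      intro u
      rw [← Finset.mul_prod_erase Finset.univ _ (Finset.mem_univ i),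
        ← Finset.mul_prod_erase (Finset.univ.erase i) _ (a := j) (by simp [hne.symm]), mul_assoc]
    rw [hsplit ts]
    set C := ∏ l ∈ (Finset.univ.erase i).erase j, ddet Y (ts l) with hC
    suffices H : AddSubgroup.closure
        {x | ∃ a' b' : Fin m → ℕ, ∑ l, a' l < ∑ l, ts i l ∧ x = ddet Y a' * ddet Y b'} ≤
        P.comap (AddMonoidHom.mulRight C) from H hex
    rw [AddSubgroup.closure_le]
    rintro _ ⟨a', b', hab, rfl⟩
    change ddet Y a' * ddet Y b' * C ∈ P
    let u : Fin r → Fin m → ℕ := Function.update (Function.update ts i a') j b'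
    have hui : u i = a' := by simp [u, hne]
    have huj : u j = b' := by simp [u]
    have hul : ∀ l, l ≠ i → l ≠ j → u l = ts l := by
      intro l h1 h2; simp [u, h1, h2]
    have hprod : ∏ l, ddet Y (u l) = ddet Y a' * ddet Y b' * C := by
      rw [hsplit u, hui, huj, hC]
      congr 1
      refine Finset.prod_congr rfl fun l hl => ?_
      simp only [Finset.mem_erase] at hl
      rw [hul l hl.2.1 hl.1]
    rw [← hprod]
    refine ih _ ?_ u rfl
    refine ⟨i, ?_, ?_⟩
    · intro l hl
      change ∑ k, u l k = ∑ k, t l k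
      rw [hul l hl.ne (hl.trans hlt).ne, hsum]
    · change ∑ k, u i k < ∑ k, t i k
      rw [hui, ← hsum]; exact hab
  · push Not at hinj
    obtain ⟨i, hi⟩ := hinj
    have h0 : ddet Y (t i) = 0 := by
      rw [Function.not_injective_iff] at hi
      obtain ⟨x, y, hxy, hne⟩ := hi
      exact AlternatingMap.map_eq_zero_of_eq _ _ (by rw [hxy]) hne
    rw [Finset.prod_eq_zero (Finset.mem_univ i) h0]
    exact zero_mem P

end Straighten

theorem domLE_of_count_s14 {N : ℕ} (S T : Finset (Fin N))
    (h : ∀ x : ℕ, x ≤ N → (T.filter fun i => i.val < x).card ≤ (S.filter fun i => i.val < x).card) :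
    domLE S T := by
  have hcard : T.card ≤ S.card := by
    have := h N le_rfl
    rwa [Finset.filter_true_of_mem (fun i _ => i.2),
      Finset.filter_true_of_mem (fun i _ => i.2)] at this
  refine ⟨hcard, ?_⟩
  intro ν hT hS
  by_contra hlt
  push Not at hlt
  have hT' : ν < T.card := by simpa using hT
  have hS' : ν < S.card := by simpa using hS
  have eT : (T.sort (· ≤ ·))[ν] = T.orderEmbOfFin rfl ⟨ν, hT'⟩ := by
    rw [Finset.orderEmbOfFin_apply]; rfl
  have eS : (S.sort (· ≤ ·))[ν] = S.orderEmbOfFin rfl ⟨ν, hS'⟩ := by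
    rw [Finset.orderEmbOfFin_apply]; rfl
  rw [eT, eS] at hlt
  set y := T.orderEmbOfFin rfl ⟨ν, hT'⟩ with hy
  have h1 := h (y.val + 1) y.2
  have hTle : ν + 1 ≤ (T.filter fun i => i.val < y.val + 1).card := by
    have : ((Finset.Iic (⟨ν, hT'⟩ : Fin T.card)).map (T.orderEmbOfFin rfl).toEmbedding) ⊆
        T.filter fun i => i.val < y.val + 1 := by
      intro z hz
      simp only [Finset.mem_map, Finset.mem_Iic] at hz
      obtain ⟨w, hw, rfl⟩ := hz
      simp only [Finset.mem_filter]
      refine ⟨Finset.orderEmbOfFin_mem _ _ _, ?_⟩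
      have : T.orderEmbOfFin rfl w ≤ y := (T.orderEmbOfFin rfl).monotone hw
      exact Nat.lt_succ_of_le this
    have := Finset.card_le_card this
    rwa [Finset.card_map, Fin.card_Iic] at this
  have hSle : (S.filter fun i => i.val < y.val + 1).card ≤ ν := by
    have : (S.filter fun i => i.val < y.val + 1) ⊆
        ((Finset.Iio (⟨ν, hS'⟩ : Fin S.card)).map (S.orderEmbOfFin rfl).toEmbedding) := by
      intro z hz
      simp only [Finset.mem_filter] at hz
      have : z ∈ Set.range (S.orderEmbOfFin rfl) := by
        rw [Finset.range_orderEmbOfFin]; exact hz.1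
      obtain ⟨w, rfl⟩ := this
      simp only [Finset.mem_map, Finset.mem_Iio]
      refine ⟨w, ?_, rfl⟩
      have h2 : S.orderEmbOfFin rfl w ≤ y := Nat.le_of_lt_succ hz.2
      exact (S.orderEmbOfFin rfl).lt_iff_lt.mp (lt_of_le_of_lt h2 hlt)
    have := Finset.card_le_card this
    rwa [Finset.card_map, Fin.card_Iio] at this
  omega

/-- The columns of the matrix `[X | J]`, `J` the antidiagonal unit matrix. -/
noncomputable def extY (m n : ℕ) (R : Type*) [CommRing R] :
    ℕ → Fin m → MvPolynomial (Fin m × Fin n) R :=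
  fun t i => if h : t < n then genX m n R i ⟨t, h⟩ else if t + i + 1 = n + m then 1 else 0

/-- The columns of `X` chosen by `t`. -/
def setB {m : ℕ} (n : ℕ) (t : Fin m → ℕ) : Finset (Fin n) :=
  Finset.univ.filter fun j => ∃ ν, t ν = j

/-- The rows not chosen by `t`. -/
def setA {m : ℕ} (n : ℕ) (t : Fin m → ℕ) : Finset (Fin m) :=
  Finset.univ.filter fun i => ∀ ν, t ν + i + 1 ≠ n + m

theorem setB_count {m n : ℕ} (t : Fin m → ℕ) (ht : Function.Injective t) (x : ℕ) (hx : x ≤ n) :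
    ((setB n t).filter fun j => j.val < x).card = (Finset.univ.filter fun ν => t ν < x).card := by
  symm
  refine Finset.card_bij (fun ν h => ⟨t ν, by simp at h; omega⟩) ?_ ?_ ?_
  · intro ν h; simpa [setB] using h
  · intro a _ b _ h; exact ht (by simpa using h)
  · intro j hj
    simp only [setB, Finset.mem_filter, Finset.mem_univ, true_and] at hj
    obtain ⟨⟨ν, hν⟩, hj⟩ := hj
    exact ⟨ν, by simp [hν, hj], Fin.ext hν⟩

theorem setA_count {m n : ℕ} (t : Fin m → ℕ) (ht : Function.Injective t) (hb : ∀ ν, t ν < n + m)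
    (x : ℕ) (hx : x ≤ m) :
    ((setA n t).filter fun j => j.val < x).card +
      (Finset.univ.filter fun ν => n + m ≤ t ν + x).card = x := by
  have h1 : (Finset.univ.filter fun ν => n + m ≤ t ν + x).card =
      ((setA n t)ᶜ.filter fun j => j.val < x).card := by
    refine Finset.card_bij (fun ν h => ⟨n + m - 1 - t ν, by
      have := hb ν; simp at h; omega⟩) ?_ ?_ ?_
    · intro ν h
      have := hb ν
      simp only [Finset.mem_filter, Finset.mem_univ, true_and] at h
      simp only [setA, Finset.mem_filter, Finset.mem_univ, true_and, Finset.mem_compl, not_forall,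
        not_not]
      exact ⟨⟨ν, by omega⟩, by omega⟩
    · intro a _ b _ h
      have := hb a
      have := hb b
      simp only [Fin.mk.injEq] at h
      exact ht (by omega)
    · intro i hi
      simp only [setA, Finset.mem_filter, Finset.mem_univ, true_and, Finset.mem_compl, not_forall,
        not_not] at hi
      obtain ⟨⟨ν, hν⟩, hi⟩ := hi
      exact ⟨ν, by simp; omega, Fin.ext (by simp; omega)⟩
  rw [h1, ← Finset.card_union_of_disjoint, ← Finset.filter_union, Finset.union_compl]
  · rw [Fin.card_filter_val_lt]; omega
  · exact Finset.disjoint_filter_filter disjoint_compl_right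

theorem domLE_setB {m n : ℕ} (t u : Fin m → ℕ) (ht : Function.Injective t)
    (hu : Function.Injective u) (h : ∀ k, t k ≤ u k) : domLE (setB n t) (setB n u) := by
  apply domLE_of_count_s14
  intro x hx
  rw [setB_count _ ht _ hx, setB_count _ hu _ hx]
  refine Finset.card_le_card fun ν hν => ?_
  simp only [Finset.mem_filter, Finset.mem_univ, true_and] at hν ⊢
  exact lt_of_le_of_lt (h ν) hν

theorem domLE_setA {m n : ℕ} (t u : Fin m → ℕ) (ht : Function.Injective t)
    (hu : Function.Injective u) (hbt : ∀ ν, t ν < n + m) (hbu : ∀ ν, u ν < n + m)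
    (h : ∀ k, t k ≤ u k) : domLE (setA n t) (setA n u) := by
  apply domLE_of_count_s14
  intro x hx
  have h1 := setA_count t ht hbt x hx
  have h2 := setA_count u hu hbu x hx
  have h3 : (Finset.univ.filter fun ν => n + m ≤ t ν + x).card ≤
      (Finset.univ.filter fun ν => n + m ≤ u ν + x).card := by
    refine Finset.card_le_card fun ν hν => ?_
    simp only [Finset.mem_filter, Finset.mem_univ, true_and] at hν ⊢
    have := h ν
    omega
  omega

theorem det_submatrix_sign {α β S : Type*} [Fintype α] [DecidableEq α] [Fintype β] [DecidableEq β]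
    [CommRing S] (M : Matrix β β S) (φ ψ : α ≃ β) :
    M.det = (M.submatrix φ ψ).det ∨ M.det = - (M.submatrix φ ψ).det := by
  have h : M.submatrix φ ψ = (M.submatrix (ψ.symm.trans φ) id).submatrix ψ ψ := by
    ext i j; simp
  rw [h, Matrix.det_submatrix_equiv_self, Matrix.det_permute]
  rcases Int.units_eq_one_or (Equiv.Perm.sign (ψ.symm.trans φ)) with h | h <;> rw [h] <;> simp

theorem ddet_eq_minor {m n : ℕ} (R : Type*) [CommRing R] (t : Fin m → ℕ)
    (ht : Function.Injective t) (hb : ∀ ν, t ν < n + m) :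
    ddet (extY m n R) t = minorM (genX m n R) (setA n t) (setB n t) ∨
    ddet (extY m n R) t = - minorM (genX m n R) (setA n t) (setB n t) := by
  classical
  have hcard : (setA n t).card = (setB n t).card := by
    have h1 := setA_count t ht hb m le_rfl
    have h2 := setB_count t ht n le_rfl
    rw [Finset.filter_true_of_mem (fun i _ => i.2)] at h1 h2
    have h3 := Finset.card_filter_add_card_filter_not (s := (Finset.univ : Finset (Fin m)))
      (fun ν => t ν < n)
    simp only [Finset.card_univ, Fintype.card_fin] at h3
    have h4 : (Finset.univ.filter fun ν => n + m ≤ t ν + m) =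
      (Finset.univ.filter fun ν => ¬ t ν < n) := by ext; simp
    rw [h4] at h1
    omega
  have hB : ∀ k : Fin (setA n t).card, ∃ ν, t ν = ((setB n t).orderEmbOfFin hcard.symm k : ℕ) := by
    intro k
    have := (setB n t).orderEmbOfFin_mem hcard.symm k
    exact (Finset.mem_filter.mp this).2
  have hA : ∀ i : {i // i ∉ setA n t}, ∃ ν, t ν + i + 1 = n + m := by
    rintro ⟨i, hi⟩
    simpa [setA] using hi
  choose fB hfB using hB
  choose fA hfA using hA
  let φ0 : Fin (setA n t).card ⊕ {i // i ∉ setA n t} → Fin m := Sum.elim fB fA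
  have hφ : Function.Bijective φ0 := by
    constructor
    · rintro (a | a) (b | b) h
      · have h' := congrArg t (show fB a = fB b from h)
        rw [hfB, hfB] at h'
        rw [((setB n t).orderEmbOfFin hcard.symm).injective (Fin.ext h')]
      · have h' := congrArg t (show fB a = fA b from h)
        rw [hfB] at h'
        have := hfA b
        have := ((setB n t).orderEmbOfFin hcard.symm a).2
        have := b.1.2
        omega
      · have h' := congrArg t (show fA a = fB b from h)
        rw [hfB] at h'
        have := hfA a
        have := ((setB n t).orderEmbOfFin hcard.symm b).2
        have := a.1.2
        omega
      · have h' := congrArg t (show fA a = fA b from h)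
        have h1 := hfA a
        have h2 := hfA b
        have : a = b := Subtype.ext (Fin.ext (by omega))
        rw [this]
    · intro ν
      by_cases hν : t ν < n
      · have hm : (⟨t ν, hν⟩ : Fin n) ∈ setB n t := by simp [setB]
        have : (⟨t ν, hν⟩ : Fin n) ∈ Set.range ((setB n t).orderEmbOfFin hcard.symm) := by
          rw [Finset.range_orderEmbOfFin]; exact hm
        obtain ⟨k, hk⟩ := this
        refine ⟨Sum.inl k, ht ?_⟩
        change t (fB k) = _
        rw [hfB, hk]
      · have := hb ν
        have hm : (⟨n + m - 1 - t ν, by omega⟩ : Fin m) ∉ setA n t := by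
          simp only [setA, Finset.mem_filter, Finset.mem_univ, true_and, not_forall, not_not]
          exact ⟨ν, by omega⟩
        refine ⟨Sum.inr ⟨_, hm⟩, ht ?_⟩
        change t (fA _) = _
        have := hfA ⟨_, hm⟩
        simp only at this
        omega
  let φ := Equiv.ofBijective φ0 hφ
  let ψ : Fin (setA n t).card ⊕ {i // i ∉ setA n t} ≃ Fin m :=
    (Equiv.sumCongr ((setA n t).orderIsoOfFin rfl).toEquiv (Equiv.refl _)).trans
      (Equiv.sumCompl (fun i => i ∈ setA n t))
  have hdet : ddet (extY m n R) t = (Matrix.of fun i => extY m n R (t i)).det := rfl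
  have hblock : (Matrix.of fun i => extY m n R (t i)).submatrix φ ψ =
      Matrix.fromBlocks
        (Matrix.of fun i j => genX m n R ((setA n t).orderEmbOfFin rfl i)
          ((setB n t).orderEmbOfFin hcard.symm j)).transpose
        (Matrix.of fun k i => extY m n R (t (fB k)) i.1) 0 1 := by
    ext a b
    congr 1
    rcases a with a | a <;> rcases b with b | b
    · change extY m n R (t (fB a)) _ = genX m n R _ _
      unfold extY
      have hlt : t (fB a) < n := by rw [hfB]; exact Fin.is_lt _
      rw [dif_pos hlt]
      congr 1
      exact Fin.ext (hfB a)
    · rfl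
    · change extY m n R (t (fA a)) ((setA n t).orderEmbOfFin rfl b) = 0
      have h1 := hfA a
      have hi := a.1.2
      unfold extY
      rw [dif_neg (by omega), if_neg]
      intro h2
      have h3 : (setA n t).orderEmbOfFin rfl b = a.1 := Fin.ext (by omega)
      exact a.2 (h3 ▸ (setA n t).orderEmbOfFin_mem rfl b)
    · change extY m n R (t (fA a)) b.1 = (1 : Matrix _ _ _) a b
      have h1 := hfA a
      have hi := a.1.2
      unfold extY
      rw [dif_neg (by omega), Matrix.one_apply]
      congr 1
      rw [Subtype.ext_iff, Fin.ext_iff, eq_iff_iff]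
      omega
  have := det_submatrix_sign (Matrix.of fun i => extY m n R (t i)) φ ψ
  rw [hblock, Matrix.det_fromBlocks_zero₂₁, Matrix.det_one, mul_one, Matrix.det_transpose] at this
  rw [hdet, minorM, dif_pos hcard]
  exact this

theorem ddet_zero {m n : ℕ} (R : Type*) [CommRing R] (t : Fin m → ℕ) (ν : Fin m)
    (hν : n + m ≤ t ν) : ddet (extY m n R) t = 0 := by
  refine AlternatingMap.map_coord_zero _ ν ?_
  ext1 i
  unfold extY
  rw [dif_neg (by omega), if_neg (by omega)]
  rfl

theorem X_eq_ddet {m n : ℕ} (R : Type*) [CommRing R] (p : Fin m × Fin n) :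
    ∃ t : Fin m → ℕ, (MvPolynomial.X p : MvPolynomial (Fin m × Fin n) R) = ddet (extY m n R) t := by
  obtain ⟨i, j⟩ := p
  refine ⟨Function.update (fun k => n + m - 1 - k) i j, ?_⟩
  have : (fun k => extY m n R (Function.update (fun k : Fin m => n + m - 1 - (k : ℕ)) i j k)) =
      Matrix.updateRow (1 : Matrix (Fin m) (Fin m) (MvPolynomial (Fin m × Fin n) R)) i
        (fun l => MvPolynomial.X (l, j)) := by
    ext1 k
    by_cases hk : k = i
    · subst hk
      ext1 l
      simp [extY, genX]
    · ext1 l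
      rw [Matrix.updateRow_ne hk, Function.update_of_ne hk]
      unfold extY
      rw [dif_neg (by omega), Matrix.one_apply]
      congr 1
      rw [Fin.ext_iff, eq_iff_iff]
      omega
  unfold ddet
  rw [this]
  change _ = Matrix.det _
  rw [← Matrix.det_transpose, ← Matrix.updateCol_transpose, Matrix.transpose_one,
    ← Matrix.cramer_apply, Matrix.cramer_one]
  rfl

/-- Every polynomial in the entries of the generic `m×n` matrix is an `R`-linear
combination of standard monomials in its minors. -/
theorem statement14 (m n : ℕ) (R : Type*) [CommRing R] :
    Submodule.span R {p : MvPolynomial (Fin m × Fin n) R |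
      ∃ (r : ℕ) (A : Fin r → Finset (Fin m)) (B : Fin r → Finset (Fin n)),
        (∀ i j, i ≤ j → domLE (A i) (A j)) ∧
        (∀ i j, i ≤ j → domLE (B i) (B j)) ∧
        p = ∏ i, minorM (genX m n R) (A i) (B i)} = ⊤ := by
  set W := Submodule.span R {p : MvPolynomial (Fin m × Fin n) R |
      ∃ (r : ℕ) (A : Fin r → Finset (Fin m)) (B : Fin r → Finset (Fin n)),
        (∀ i j, i ≤ j → domLE (A i) (A j)) ∧
        (∀ i j, i ≤ j → domLE (B i) (B j)) ∧
        p = ∏ i, minorM (genX m n R) (A i) (B i)} with hW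
  have key : ∀ (r : ℕ) (t : Fin r → Fin m → ℕ), ∏ i, ddet (extY m n R) (t i) ∈ W := by
    intro r t
    refine straighten (extY m n R) W.toAddSubgroup r ?_ t
    intro t hmono hle
    by_cases hb : ∀ i ν, t i ν < n + m
    · refine mem_of_signs Finset.univ _ _
        (fun i => minorM (genX m n R) (setA n (t i)) (setB n (t i)))
        (fun i => ddet_eq_minor R (t i) (hmono i).injective (hb i)) ?_
      refine Submodule.subset_span ⟨r, fun i => setA n (t i), fun i => setB n (t i), ?_, ?_, rfl⟩
      · intro i j hij
        exact domLE_setA _ _ (hmono i).injective (hmono j).injective (hb i) (hb j) (hle i j hij)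
      · intro i j hij
        exact domLE_setB _ _ (hmono i).injective (hmono j).injective (hle i j hij)
    · push Not at hb
      obtain ⟨i, ν, h⟩ := hb
      rw [Finset.prod_eq_zero (Finset.mem_univ i) (ddet_zero R (t i) ν h)]
      exact zero_mem _
  rw [eq_top_iff, ← Algebra.top_toSubmodule, ← MvPolynomial.adjoin_range_X,
    Algebra.adjoin_eq_span, Submodule.span_le]
  intro x hx
  have : ∃ (r : ℕ) (t : Fin r → Fin m → ℕ), x = ∏ i, ddet (extY m n R) (t i) := by
    induction hx using Submonoid.closure_induction_left with
    | one => exact ⟨0, fun _ => 0, by simp⟩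
    | mul_left x hx y hy ih =>
      obtain ⟨p, rfl⟩ := hx
      obtain ⟨r, t, rfl⟩ := ih
      obtain ⟨s, hs⟩ := X_eq_ddet (n := n) R p
      refine ⟨r + 1, Fin.cons s t, ?_⟩
      rw [Fin.prod_univ_succ, hs]
      simp
  obtain ⟨r, t, rfl⟩ := this
  exact key r t
end

section
/- Let R be a nonzero commutative ring and let X be the generic m×n matrix whose entries are the distinct indeterminates x_{ij} of the polynomial ring R[x_{ij} : 1 ≤ i ≤ m, 1 ≤ j ≤ n]. Then the standard monomials X(A₁|B₁)⋯X(A_r|B_r) (with A₁ ≤ ⋯ ≤ A_r, B₁ ≤ ⋯ ≤ B_r, and all factors with Aᵢ = Bᵢ = ∅ removed) are pairwise distinct and linearly independent over R. -/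
open Finset

/-- Index data for a standard monomial: a finite list of pairs `(Aᵢ, Bᵢ)` of genuine
minor indices (`|Aᵢ| = |Bᵢ|`, not both empty) with `A₁ ≤ ⋯ ≤ A_r` and `B₁ ≤ ⋯ ≤ B_r`. -/
def StdIdx (m n : ℕ) : Type :=
  {L : List (Finset (Fin m) × Finset (Fin n)) //
    (∀ p ∈ L, p.1.card = p.2.card ∧ p ≠ (∅, ∅)) ∧
    L.Chain' fun p q => domLE p.1 q.1 ∧ domLE p.2 q.2}

/-- The standard monomial `X(A₁|B₁)⋯X(A_r|B_r)` in the minors of the generic matrix. -/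
noncomputable def stdMon (m n : ℕ) (R : Type*) [CommRing R] (L : StdIdx m n) :
    MvPolynomial (Fin m × Fin n) R :=
  (L.1.map fun p => minorM (genX m n R) p.1 p.2).prod

namespace StdAux

open MvPolynomial

/-- Sum of distinct naturals. -/
lemma sum_val_le : ∀ (p : ℕ) (f : Fin p → ℕ), Function.Injective f →
    ∑ i : Fin p, (i : ℕ) ≤ ∑ i, f i := by
  intro p f hf
  have h1 : ∑ i, f i = ∑ x ∈ Finset.univ.image f, x := by
    rw [Finset.sum_image (fun a _ b _ h => hf h)]
  have h2 : ∀ s : Finset ℕ, ∑ x ∈ Finset.range s.card, x ≤ ∑ x ∈ s, x := by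
    intro s
    induction s using Finset.induction_on_max with
    | empty => simp
    | insert a s hlt ih =>
      have hn : a ∉ s := fun h => lt_irrefl _ (hlt a h)
      have hca : s.card ≤ a := by
        have hsub : s ⊆ Finset.range a := fun x hx => Finset.mem_range.2 (hlt x hx)
        simpa using Finset.card_le_card hsub
      rw [Finset.card_insert_of_notMem hn, Finset.sum_range_succ, Finset.sum_insert hn]
      omega
  have h3 := h2 (Finset.univ.image f)
  rw [← h1, Finset.card_image_of_injective _ hf, Finset.card_univ, Fintype.card_fin] at h3
  rwa [Fin.sum_univ_eq_sum_range (fun i => i)]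

lemma rearr : ∀ (p : ℕ) (g : Fin p → ℕ) (f : Fin p → ℕ), StrictAnti g → (∀ i, 0 < g i) →
    Function.Injective f → ∑ i, g i * f i ≤ ∑ i : Fin p, g i * (i : ℕ) →
    ∀ i, f i = (i : ℕ) := by
  intro p
  induction p with
  | zero => intro g f _ _ _ _ i; exact i.elim0
  | succ p ih =>
    intro g f hg hpos hf hle
    set c := g (Fin.last p) with hc
    have hcpos : 0 < c := hpos _
    have hlt : ∀ i : Fin p, c < g i.castSucc := fun i => hg (Fin.castSucc_lt_last i)
    have key : ∀ h : Fin (p+1) → ℕ, ∑ i, g i * h i =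
        c * ∑ i, h i + ∑ i : Fin p, (g i.castSucc - c) * h i.castSucc := by
      intro h
      rw [Fin.sum_univ_castSucc, Fin.sum_univ_castSucc (f := h), mul_add, Finset.mul_sum,
        add_right_comm, ← Finset.sum_add_distrib]
      congr 1
      refine Finset.sum_congr rfl fun i _ => ?_
      rw [← add_mul, Nat.add_sub_cancel' (hlt i).le]
    rw [key f, key] at hle
    have hs := sum_val_le _ f hf
    have hs' := Nat.mul_le_mul_left c hs
    have hfi : Function.Injective (fun i : Fin p => f i.castSucc) :=
      hf.comp (Fin.castSucc_injective p)
    have h1 := ih (fun i => g i.castSucc - c) (fun i => f i.castSucc)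
      (by
        intro i j hij
        have := hg (Fin.castSucc_lt_castSucc_iff.2 hij)
        have := hlt j
        dsimp only
        omega)
      (fun i => Nat.sub_pos_of_lt (hlt i)) hfi (by
        simp only [Fin.val_castSucc] at hle
        omega)
    have h2 : ∑ i, f i ≤ ∑ i : Fin (p+1), (i : ℕ) := by
      simp only [h1, Fin.val_castSucc] at hle
      exact Nat.le_of_mul_le_mul_left (by omega) hcpos
    rw [Fin.sum_univ_castSucc, Fin.sum_univ_castSucc] at h2 hs
    simp only [h1, Fin.val_castSucc] at h2 hs
    intro i
    refine Fin.lastCases ?_ (fun j => ?_) i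
    · omega
    · simpa using h1 j

section lead
variable {σ R : Type*} [CommRing R] (w : (σ →₀ ℕ) →+ ℕ)

open Classical in
/-- `e` is the unique lowest-weight exponent of `P`, with coefficient one. -/
def IsLead (P : MvPolynomial σ R) (e : σ →₀ ℕ) : Prop :=
  ∀ d, w d ≤ w e → coeff d P = if d = e then 1 else 0

lemma isLead_one : IsLead w (1 : MvPolynomial σ R) 0 := by
  classical
  intro d _
  rw [coeff_one]
  simp only [eq_comm]

lemma IsLead.mul {P Q : MvPolynomial σ R} {e e' : σ →₀ ℕ} (hP : IsLead w P e)
    (hQ : IsLead w Q e') : IsLead w (P * Q) (e + e') := by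
  classical
  intro d hd
  rw [coeff_mul]
  have : ∀ x ∈ Finset.HasAntidiagonal.antidiagonal d, coeff x.1 P * coeff x.2 Q =
      if x = (e, e') then 1 else 0 := by
    rintro ⟨a, b⟩ hx
    rw [Finset.HasAntidiagonal.mem_antidiagonal] at hx
    dsimp only at hx ⊢
    have hw : w a + w b ≤ w e + w e' := by rw [← map_add, ← map_add, hx]; exact hd
    rcases lt_trichotomy (w a) (w e) with h | h | h
    · have hne : a ≠ e := by rintro rfl; exact lt_irrefl _ h
      rw [hP a h.le, if_neg hne, zero_mul, if_neg (by simp [hne])]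
    · rw [hP a h.le, hQ b (by omega)]
      by_cases h1 : a = e <;> by_cases h2 : b = e' <;> simp [h1, h2]
    · have hlt : w b < w e' := by omega
      have hne : b ≠ e' := by rintro rfl; exact lt_irrefl _ hlt
      rw [hQ b hlt.le, if_neg hne, mul_zero, if_neg (by simp [hne])]
  rw [Finset.sum_congr rfl this, Finset.sum_ite_eq']
  simp only [Finset.HasAntidiagonal.mem_antidiagonal, eq_comm]

lemma isLead_list {ι : Type*} (P : ι → MvPolynomial σ R) (e : ι → σ →₀ ℕ) (L : List ι)
    (h : ∀ i ∈ L, IsLead w (P i) (e i)) : IsLead w (L.map P).prod (L.map e).sum := by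
  induction L with
  | nil => simpa using isLead_one w
  | cons a L ih =>
    simp only [List.map_cons, List.prod_cons, List.sum_cons]
    exact (h a (by simp)).mul w (ih fun i hi => h i (by simp [hi]))

lemma linInd {ι : Type*} (P : ι → MvPolynomial σ R) (e : ι → σ →₀ ℕ)
    (he : Function.Injective e) (h : ∀ i, IsLead w (P i) (e i)) : LinearIndependent R P := by
  classical
  rw [linearIndependent_iff']
  intro s c hc
  by_contra! hne
  obtain ⟨i0, hi0, hci0⟩ := hne
  obtain ⟨i, hi, hmin⟩ := Finset.exists_min_image (s.filter fun i => c i ≠ 0) (fun i => w (e i))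
    ⟨i0, by simp [hi0, hci0]⟩
  rw [Finset.mem_filter] at hi
  have h0 := congrArg (coeff (e i)) hc
  rw [coeff_sum, Finset.sum_eq_single i] at h0
  · rw [coeff_smul, h i _ le_rfl] at h0
    simp at h0
    exact hi.2 h0
  · intro j hj hji
    by_cases hcj : c j = 0
    · simp [hcj]
    · rw [coeff_smul, h j _ (hmin j (by simp [hj, hcj])), if_neg, smul_zero]
      exact fun hh => hji (he hh).symm
  · exact fun hh => absurd hi.1 hh
end lead

open Classical in
lemma det_mul_expand {S : Type*} [CommRing S] {p : ℕ} {K : Type*} [Fintype K]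
    (M : Fin p → K → S) (N : K → Fin p → S) :
    (Matrix.of fun i j : Fin p => ∑ k, M i k * N k j).det =
      ∑ f : Fin p → K, ∑ s : Equiv.Perm (Fin p),
        if Function.Injective f then
          ((Equiv.Perm.sign s : ℤ) : S) * ∏ i, (M (s i) (f i) * N (f i) i) else 0 := by
  classical
  rw [Matrix.det_apply']
  simp only [Matrix.of_apply, Finset.prod_univ_sum, Fintype.piFinset_univ, Finset.mul_sum]
  rw [Finset.sum_comm]
  refine Finset.sum_congr rfl fun f _ => ?_
  by_cases hf : Function.Injective f
  · simp [hf]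
  · simp only [hf, if_false, Finset.sum_const_zero]
    simp only [Finset.prod_mul_distrib, ← mul_assoc]
    rw [← Finset.sum_mul]
    have hd := Matrix.det_apply' (Matrix.of fun i j : Fin p => M i (f j))
    simp only [Matrix.of_apply] at hd
    rw [← hd]
    simp only [Function.Injective] at hf
    push Not at hf
    obtain ⟨i, j, hij, hne⟩ := hf
    rw [Matrix.det_zero_of_column_eq hne (by intro k; simp [hij]), zero_mul]

/-- The variables of the two factors `Y` and `Z`. -/
abbrev V (m n : ℕ) := (Fin m × ℕ) ⊕ (ℕ × Fin n)

/-- Weights of the variables. -/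
def wt (m n : ℕ) : V m n → ℕ
  | Sum.inl (a, k) => (m - a) * k
  | Sum.inr (k, b) => (n - b) * k

/-- Leading exponent of the minor. -/
noncomputable def ex (m n : ℕ) (q : Finset (Fin m) × Finset (Fin n)) : V m n →₀ ℕ :=
  ∑ i : Fin q.1.card, Finsupp.single (Sum.inl (q.1.orderEmbOfFin rfl i, (i : ℕ))) 1 +
  ∑ i : Fin q.2.card, Finsupp.single (Sum.inr ((i : ℕ), q.2.orderEmbOfFin rfl i)) 1

/-- Substitution `X = YZ`. -/
noncomputable def phi (m n : ℕ) (R : Type*) [CommRing R] :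
    MvPolynomial (Fin m × Fin n) R →ₐ[R] MvPolynomial (V m n) R :=
  aeval fun ij => ∑ k : Fin m, X (Sum.inl (ij.1, (k : ℕ))) * X (Sum.inr ((k : ℕ), ij.2))

lemma sum_cast {M : Type*} [AddCommMonoid M] {p n : ℕ} (B : Finset (Fin n)) (h : B.card = p)
    (F : ℕ → Fin n → M) : ∑ i : Fin B.card, F i (B.orderEmbOfFin rfl i) =
      ∑ i : Fin p, F i (B.orderEmbOfFin h i) := by
  subst h; rfl

lemma isLead_minor (m n : ℕ) (R : Type*) [CommRing R] (A : Finset (Fin m)) (B : Finset (Fin n))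
    (h : A.card = B.card) :
    IsLead (Finsupp.weight (wt m n)) (phi m n R (minorM (genX m n R) A B)) (ex m n (A, B)) := by
  classical
  intro d hd
  have hpm : A.card ≤ m := by simpa using Finset.card_le_univ A
  set a := A.orderEmbOfFin rfl with ha
  set b := B.orderEmbOfFin h.symm with hb
  have hex : ex m n (A, B) = ∑ i : Fin A.card, (Finsupp.single (Sum.inl (a i, (i : ℕ))) 1 +
      Finsupp.single (Sum.inr ((i : ℕ), b i)) 1) := by
    rw [Finset.sum_add_distrib, ex]
    congr 1
    exact sum_cast B h.symm (fun k x => Finsupp.single (Sum.inr (k, x)) 1)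
  have e1 : phi m n R (minorM (genX m n R) A B) =
      (Matrix.of fun i j : Fin A.card => ∑ k : Fin m,
        (X (Sum.inl (a i, (k : ℕ))) : MvPolynomial (V m n) R) * X (Sum.inr ((k : ℕ), b j))).det := by
    rw [minorM, dif_pos h, AlgHom.map_det]
    congr 1
    refine Matrix.ext fun i j => ?_
    simp [genX, phi, ha, hb]
  let E : (Fin A.card → Fin m) → Equiv.Perm (Fin A.card) → (V m n →₀ ℕ) := fun f s =>
    ∑ i, (Finsupp.single (Sum.inl (a (s i), (f i : ℕ))) 1 +
      Finsupp.single (Sum.inr ((f i : ℕ), b i)) 1)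
  have hmon : ∀ f s, (∏ i, ((X (Sum.inl (a (s i), (f i : ℕ))) : MvPolynomial (V m n) R) *
      X (Sum.inr ((f i : ℕ), b i)))) = monomial (E f s) 1 := by
    intro f s
    simp only [E, X, monomial_mul, one_mul]
    rw [monomial_sum_one]
  rw [e1, det_mul_expand]
  simp only [hmon]
  let f0 : Fin A.card → Fin m := Fin.castLE hpm
  have hE0 : E f0 1 = ex m n (A, B) := by rw [hex]; simp [E, f0]
  have hwE : ∀ f s, Finsupp.weight (wt m n) (E f s) =
      ∑ i, (m - a (s i)) * (f i : ℕ) + ∑ i, (n - b i) * (f i : ℕ) := by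
    intro f s
    simp only [E, map_sum, map_add, Finsupp.weight_single, wt, Finset.sum_add_distrib, one_smul]
  have huniq : ∀ f s, Function.Injective f → Finsupp.weight (wt m n) (E f s) ≤
      Finsupp.weight (wt m n) (E f0 1) → f = f0 ∧ s = 1 := by
    intro f s hf hle
    rw [hwE, hwE] at hle
    have hga : StrictAnti (fun i => m - (a i : ℕ)) := by
      intro i j hij
      have : a i < a j := a.strictMono hij
      have := (a j).2
      dsimp only
      omega
    have hgb : StrictAnti (fun i => n - (b i : ℕ)) := by
      intro i j hij
      have : b i < b j := b.strictMono hij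
      have := (b j).2
      dsimp only
      omega
    have hpa : ∀ i, 0 < m - (a i : ℕ) := fun i => Nat.sub_pos_of_lt (a i).2
    have hpb : ∀ i, 0 < n - (b i : ℕ) := fun i => Nat.sub_pos_of_lt (b i).2
    have hre : ∑ i, (m - (a (s i) : ℕ)) * (f i : ℕ) =
        ∑ i, (m - (a i : ℕ)) * (f (s.symm i) : ℕ) := by
      have := Equiv.sum_comp s (fun i => (m - (a i : ℕ)) * (f (s.symm i) : ℕ))
      simpa using this
    rw [hre] at hle
    simp only [f0, Equiv.Perm.coe_one, id, Fin.val_castLE] at hle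
    have hf1 : Function.Injective (fun i => (f i : ℕ)) := Fin.val_injective.comp hf
    have hf2 : Function.Injective (fun i => (f (s.symm i) : ℕ)) := hf1.comp s.symm.injective
    have c1 := rearr _ _ _ hga hpa hf2
    have c2 := rearr _ _ _ hgb hpb hf1
    have d1 : ∀ i, (f (s.symm i) : ℕ) = i := by
      by_cases hh : ∑ i, (m - (a i : ℕ)) * (f (s.symm i) : ℕ) ≤ ∑ i, (m - (a i : ℕ)) * (i : ℕ)
      · exact c1 hh
      · have := c2 (by omega)
        have hq : ∑ i, (n - (b i : ℕ)) * (f i : ℕ) = ∑ i, (n - (b i : ℕ)) * (i : ℕ) :=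
          Finset.sum_congr rfl fun i _ => by rw [this i]
        omega
    have d2 : ∀ i, (f i : ℕ) = i := by
      apply c2
      simp only [d1] at hle
      omega
    refine ⟨funext fun i => Fin.ext (d2 i), ?_⟩
    ext i
    have := d1 (s i)
    rw [Equiv.symm_apply_apply, d2] at this
    simpa using this.symm
  rw [← hE0] at hd ⊢
  rw [coeff_sum, Finset.sum_eq_single f0, coeff_sum, Finset.sum_eq_single 1]
  · rw [if_pos (Fin.castLE_injective hpm)]
    simp [coeff_monomial, eq_comm]
  · intro s _ hs
    split_ifs with hinj
    · have : ((Equiv.Perm.sign s : ℤ) : MvPolynomial (V m n) R) = C ((Equiv.Perm.sign s : ℤ) : R) := by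
        simp
      rw [this, coeff_C_mul, coeff_monomial, if_neg, mul_zero]
      rintro rfl
      exact hs (huniq _ _ hinj hd).2
    · simp
  · simp
  · intro f _ hfne
    rw [coeff_sum]
    refine Finset.sum_eq_zero fun s _ => ?_
    split_ifs with hinj
    · have : ((Equiv.Perm.sign s : ℤ) : MvPolynomial (V m n) R) = C ((Equiv.Perm.sign s : ℤ) : R) := by
        simp
      rw [this, coeff_C_mul, coeff_monomial, if_neg, mul_zero]
      rintro rfl
      exact hfne (huniq _ _ hinj hd).1
    · simp
  · simp

lemma domLE_trans {α : Type*} [LinearOrder α] {S T U : Finset α} (h : domLE S T)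
    (h' : domLE T U) : domLE S U := by
  refine ⟨h'.1.trans h.1, fun ν hU hS => ?_⟩
  have hT : ν < (T.sort (· ≤ ·)).length := by
    have := h'.1
    rw [Finset.length_sort] at hU ⊢
    omega
  exact (h.2 ν hT hS).trans (h'.2 ν hU hT)

lemma domLE_refl {α : Type*} [LinearOrder α] (S : Finset α) : domLE S S :=
  ⟨le_rfl, fun _ _ _ => le_rfl⟩

lemma domLE_antisymm {α : Type*} [LinearOrder α] {S T : Finset α} (h : domLE S T)
    (h' : domLE T S) : S = T := by
  have : S.sort (· ≤ ·) = T.sort (· ≤ ·) := by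
    apply List.ext_getElem
    · simp only [Finset.length_sort]; exact le_antisymm h'.1 h.1
    · intro i h1 h2
      exact le_antisymm (h.2 i h2 h1) (h'.2 i h1 h2)
  rw [← Finset.sort_toFinset S (· ≤ ·), this, Finset.sort_toFinset]

lemma ex_inl (m n : ℕ) (q : Finset (Fin m) × Finset (Fin n)) (x : Fin m) (k : ℕ) :
    ex m n q (Sum.inl (x, k)) ≠ 0 ↔ ∃ hk : k < (q.1.sort (· ≤ ·)).length,
      (q.1.sort (· ≤ ·))[k] = x := by
  classical
  simp only [ex, Finsupp.add_apply, Finsupp.finsetSum_apply, Finsupp.single_apply]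
  simp only [reduceCtorEq, if_false, Finset.sum_const_zero, add_zero, Sum.inl.injEq, Prod.mk.injEq,
    ne_eq, Finset.sum_eq_zero_iff, not_forall]
  constructor
  · rintro ⟨i, _, hi⟩
    simp only [ite_eq_right_iff, not_forall] at hi
    obtain ⟨⟨h1, rfl⟩, _⟩ := hi
    exact ⟨by simp, by rw [← h1, Finset.orderEmbOfFin_apply]; rfl⟩
  · rintro ⟨hk, h1⟩
    refine ⟨⟨k, by simpa using hk⟩, Finset.mem_univ _, ?_⟩
    rw [Finset.orderEmbOfFin_apply]
    simp [h1]

lemma ex_inr (m n : ℕ) (q : Finset (Fin m) × Finset (Fin n)) (x : Fin n) (k : ℕ) :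
    ex m n q (Sum.inr (k, x)) ≠ 0 ↔ ∃ hk : k < (q.2.sort (· ≤ ·)).length,
      (q.2.sort (· ≤ ·))[k] = x := by
  classical
  simp only [ex, Finsupp.add_apply, Finsupp.finsetSum_apply, Finsupp.single_apply]
  simp only [reduceCtorEq, if_false, Finset.sum_const_zero, zero_add, Sum.inr.injEq, Prod.mk.injEq,
    ne_eq, Finset.sum_eq_zero_iff, not_forall]
  constructor
  · rintro ⟨i, _, hi⟩
    simp only [ite_eq_right_iff, not_forall] at hi
    obtain ⟨⟨rfl, h1⟩, _⟩ := hi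
    exact ⟨by simp, by rw [← h1, Finset.orderEmbOfFin_apply]; rfl⟩
  · rintro ⟨hk, h1⟩
    refine ⟨⟨k, by simpa using hk⟩, Finset.mem_univ _, ?_⟩
    rw [Finset.orderEmbOfFin_apply]
    simp [h1]

lemma sum_ne {ι σ : Type*} (e : ι → σ →₀ ℕ) (L : List ι) (v : σ) :
    (L.map e).sum v ≠ 0 ↔ ∃ q ∈ L, e q v ≠ 0 := by
  induction L with
  | nil => simp
  | cons a L ih =>
    simp only [List.map_cons, List.sum_cons, Finsupp.add_apply, List.mem_cons, exists_eq_or_imp]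
    rw [← ih]
    omega

/-- The order relation on pairs. -/
def rel {m n : ℕ} (p q : Finset (Fin m) × Finset (Fin n)) : Prop :=
  domLE p.1 q.1 ∧ domLE p.2 q.2

lemma head_le {m n : ℕ} {p p' : Finset (Fin m) × Finset (Fin n)}
    {L L' : List (Finset (Fin m) × Finset (Fin n))}
    (hp' : ∀ q ∈ p' :: L', rel p' q)
    (h : ((p :: L).map (ex m n)).sum = ((p' :: L').map (ex m n)).sum) : rel p' p := by
  have k1 : ∀ (ν : ℕ) (hν : ν < (p.1.sort (· ≤ ·)).length),
      ∃ h2 : ν < (p'.1.sort (· ≤ ·)).length, (p'.1.sort (· ≤ ·))[ν] ≤ (p.1.sort (· ≤ ·))[ν] := by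
    intro ν hν
    have : ((p :: L).map (ex m n)).sum (Sum.inl ((p.1.sort (· ≤ ·))[ν], ν)) ≠ 0 := by
      rw [sum_ne]
      exact ⟨p, by simp, (ex_inl _ _ _ _ _).2 ⟨hν, rfl⟩⟩
    rw [h, sum_ne] at this
    obtain ⟨q, hq, hq2⟩ := this
    obtain ⟨hk, hx⟩ := (ex_inl _ _ _ _ _).1 hq2
    have hr := (hp' q hq).1
    have h2 : ν < (p'.1.sort (· ≤ ·)).length := by
      have := hr.1
      rw [Finset.length_sort] at hk ⊢
      omega
    exact ⟨h2, hx ▸ hr.2 ν hk h2⟩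
  have k2 : ∀ (ν : ℕ) (hν : ν < (p.2.sort (· ≤ ·)).length),
      ∃ h2 : ν < (p'.2.sort (· ≤ ·)).length, (p'.2.sort (· ≤ ·))[ν] ≤ (p.2.sort (· ≤ ·))[ν] := by
    intro ν hν
    have : ((p :: L).map (ex m n)).sum (Sum.inr (ν, (p.2.sort (· ≤ ·))[ν])) ≠ 0 := by
      rw [sum_ne]
      exact ⟨p, by simp, (ex_inr _ _ _ _ _).2 ⟨hν, rfl⟩⟩
    rw [h, sum_ne] at this
    obtain ⟨q, hq, hq2⟩ := this
    obtain ⟨hk, hx⟩ := (ex_inr _ _ _ _ _).1 hq2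
    have hr := (hp' q hq).2
    have h2 : ν < (p'.2.sort (· ≤ ·)).length := by
      have := hr.1
      rw [Finset.length_sort] at hk ⊢
      omega
    exact ⟨h2, hx ▸ hr.2 ν hk h2⟩
  refine ⟨⟨?_, fun ν hT hS => (k1 ν hT).2⟩, ⟨?_, fun ν hT hS => (k2 ν hT).2⟩⟩
  · by_contra! hlt
    obtain ⟨h2, _⟩ := k1 p'.1.card (by rwa [Finset.length_sort])
    simp at h2
  · by_contra! hlt
    obtain ⟨h2, _⟩ := k2 p'.2.card (by rwa [Finset.length_sort])
    simp at h2

lemma ex_ne_zero {m n : ℕ} {q : Finset (Fin m) × Finset (Fin n)} (h : q ≠ (∅, ∅)) :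
    ex m n q ≠ 0 := by
  intro h0
  apply h
  ext1
  · by_contra hne
    have hc : 0 < (q.1.sort (· ≤ ·)).length := by
      rw [Finset.length_sort]; exact Finset.card_pos.2 (Finset.nonempty_iff_ne_empty.2 hne)
    exact (ex_inl m n q _ 0).2 ⟨hc, rfl⟩ (by rw [h0]; rfl)
  · by_contra hne
    have hc : 0 < (q.2.sort (· ≤ ·)).length := by
      rw [Finset.length_sort]; exact Finset.card_pos.2 (Finset.nonempty_iff_ne_empty.2 hne)
    exact (ex_inr m n q _ 0).2 ⟨hc, rfl⟩ (by rw [h0]; rfl)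

lemma cons_ne {m n : ℕ} {p : Finset (Fin m) × Finset (Fin n)}
    {L : List (Finset (Fin m) × Finset (Fin n))} (h : p ≠ (∅, ∅)) :
    ((p :: L).map (ex m n)).sum ≠ 0 := by
  intro h0
  simp only [List.map_cons, List.sum_cons, add_eq_zero] at h0
  exact ex_ne_zero h h0.1

lemma list_inj {m n : ℕ} : ∀ L L' : List (Finset (Fin m) × Finset (Fin n)),
    (∀ p ∈ L, p ≠ (∅, ∅)) → (∀ p ∈ L', p ≠ (∅, ∅)) → L.Pairwise rel → L'.Pairwise rel →
    (L.map (ex m n)).sum = (L'.map (ex m n)).sum → L = L' := by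
  intro L
  induction L with
  | nil =>
    intro L' _ h' _ _ he
    cases L' with
    | nil => rfl
    | cons p' L' => exact absurd he.symm (by simpa using cons_ne (L := L') (h' p' (by simp)))
  | cons p L ih =>
    intro L' h h' hc hc' he
    cases L' with
    | nil => exact absurd he (by simpa using cons_ne (L := L) (h p (by simp)))
    | cons p' L' =>
      rw [List.pairwise_cons] at hc hc'
      have r1 : rel p' p := head_le (by
        intro q hq
        rcases List.mem_cons.1 hq with rfl | hq
        · exact ⟨domLE_refl _, domLE_refl _⟩
        · exact hc'.1 q hq) he
      have r2 : rel p p' := head_le (by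
        intro q hq
        rcases List.mem_cons.1 hq with rfl | hq
        · exact ⟨domLE_refl _, domLE_refl _⟩
        · exact hc.1 q hq) he.symm
      have hpp : p = p' := Prod.ext (domLE_antisymm r2.1 r1.1) (domLE_antisymm r2.2 r1.2)
      subst hpp
      simp only [List.map_cons, List.sum_cons] at he
      rw [ih L' (fun q hq => h q (by simp [hq])) (fun q hq => h' q (by simp [hq])) hc.2 hc'.2
        (add_left_cancel he)]

lemma ex_inj (m n : ℕ) :
    Function.Injective (fun L : StdIdx m n => (L.1.map (ex m n)).sum) := by
  have : IsTrans (Finset (Fin m) × Finset (Fin n)) rel :=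
    ⟨fun a b c h h' => ⟨domLE_trans h.1 h'.1, domLE_trans h.2 h'.2⟩⟩
  have pw : ∀ L : StdIdx m n, L.1.Pairwise rel := fun L => List.isChain_iff_pairwise.1 L.2.2
  intro L L' h
  exact Subtype.ext (list_inj _ _ (fun p hp => (L.2.1 p hp).2) (fun p hp => (L'.2.1 p hp).2)
    (pw L) (pw L') h)

lemma isLead_stdMon (m n : ℕ) (R : Type*) [CommRing R] (L : StdIdx m n) :
    IsLead (Finsupp.weight (wt m n)) (phi m n R (stdMon m n R L)) (L.1.map (ex m n)).sum := by
  have he : phi m n R (stdMon m n R L) =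
      (L.1.map fun p => phi m n R (minorM (genX m n R) p.1 p.2)).prod := by
    rw [stdMon, map_list_prod, List.map_map, Function.comp_def]
  rw [he]
  have hl : ∀ p ∈ L.1, IsLead (Finsupp.weight (wt m n))
      (phi m n R (minorM (genX m n R) p.1 p.2)) (ex m n p) := by
    rintro ⟨A, B⟩ hp
    exact isLead_minor m n R A B (L.2.1 _ hp).1
  apply isLead_list
  exact hl

lemma phi_linInd (m n : ℕ) (R : Type*) [CommRing R] :
    LinearIndependent R (fun L : StdIdx m n => phi m n R (stdMon m n R L)) :=
  linInd (Finsupp.weight (wt m n)) _ (fun L : StdIdx m n => (L.1.map (ex m n)).sum)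
    (ex_inj m n) (isLead_stdMon m n R)

lemma stdMon_linInd (m n : ℕ) (R : Type*) [CommRing R] :
    LinearIndependent R (stdMon m n R) :=
  LinearIndependent.of_comp (phi m n R).toLinearMap (phi_linInd m n R)

end StdAux

/-- Theorem 4: for the generic matrix over a nonzero commutative ring, the standard
monomials in its minors are pairwise distinct and linearly independent. -/
theorem statement16 (m n : ℕ) (R : Type*) [CommRing R] [Nontrivial R] :
    Function.Injective (stdMon m n R) ∧ LinearIndependent R (stdMon m n R) := by
  exact ⟨(StdAux.stdMon_linInd m n R).injective, StdAux.stdMon_linInd m n R⟩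
end
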